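/- Let 𝔹^n ⊂ ℂ^n (n ≥ 2) be the open unit ball and let f be a function on the unit sphere ∂𝔹^n that is the restriction of a function real-analytic on a neighborhood of ∂𝔹^n. Let p₀ be a point of ∂𝔹^n. Suppose that for every complex affine line L passing through p₀ with L ∩ 𝔹^n ≠ ∅, f extends holomorphically along L: there exists g continuous on the closure of L ∩ 𝔹^n, holomorphic on L ∩ 𝔹^n, with g = f on L ∩ ∂𝔹^n. Then f extends holomorphically to 𝔹^n: there exists F continuous on the closed unit ball, holomorphic on 𝔹^n, with F = f on ∂𝔹^n. -/

import Mathlib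

/-!
Write `p` for the centre of the pencil of lines.  A line through `p` meeting the ball has a unique
direction `v` with `⟪p, v⟫ = -1`; in the parametrisation `ζ ↦ p + ζ • v` the ball cuts out the disc
`|s ζ - 1| < 1`, `s = ‖v‖²`, and `p` is the boundary point `ζ = 0` of this disc.  The extensions
`g v` along these lines glue to one function (`glue`) on the closed ball, which equals `f` on the
sphere and is holomorphic along every line through `p`.  The content of the theorem is that `glue`
is holomorphic and continuous up to the sphere.

**Holomorphy across the lines.**  Let `⟪p, η⟫ = 0` and let `t ∈ ℂ` move the direction `v + t • η`.
The claim is that `g (v + t • η) ζ` is holomorphic in `t`.  Near `p`, complexify `f` on the plane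
spanned by `v` and `η`, that is, treat the conjugates of the two coordinates as independent
variables (`exists_complexification_plane`).  On the circle of the line with parameter `t` one has
`conj ζ = ζ / (N ζ - 1)` with `N = ‖v + t • η‖²` a polynomial in `t` and `conj t`
(`conj_eq_of_mem_circle`).  Writing `l` for `t` and an independent `m` for `conj t`, one gets a
function `KK l m ζ`, holomorphic in `(l, m, ζ)`, which for `m = conj l` equals `f` on the small
arcs of the circle at `ζ = 0`.

The Taylor coefficients of `KK l m` at `ζ = 0` are entire functions of `(l, m)`.  If `|l|` and `|m|`
are large then `|N|` is large, and `KK l m` is holomorphic on a disc `|ζ| ≤ r` minus a small hole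
inside it, with `r` independent of `m`.  When `m = conj l` the hole lies in the disc of the line and
is filled by the extension `g`, so the Taylor coefficients are integrals of `KK l m` over `|ζ| = r`
(`circleIntegral_eq_iteratedDeriv_of_extends`).  By polarization (`eq_zero_of_antidiagonal`) the
same holds for all large `m`.  The integrals are bounded in `m`, so by Liouville the coefficients
do not depend on `m` (`KK_coeff_eq`).  Hence `g (v + t • η) ζ = KK t (conj t) ζ = KK t 0 ζ` is
holomorphic in `t` for `ζ` near `0` (`exists_holomorphic_in_parameter`), and Cauchy's formula in
`t` propagates this along the discs (`differentiableAt_in_parameter`).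

**Conclusion.**  `glue` is real differentiable in the ball because it is a Cauchy integral of `f`
over circles depending smoothly on the point (`glue_real_differentiableAt`); being complex
differentiable along the line through `p` and across it, it is complex differentiable
(`differentiableAt_complex_of_directions`).  Continuity at sphere points other than `p` follows from
the maximum principle on the discs (`glue_continuousWithinAt_of_ne`), and at `p` from the estimate
`‖glue z - f p‖² ≤ L ‖z - p‖` (`glue_bound_near_center`).
-/

open Complex Metric Set

/-- `f`, defined on the unit sphere of `ℂⁿ`, extends holomorphically along the complex
affine line `L = {q + ζ v : ζ ∈ ℂ}`: there is `g` continuous on the closure of the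
parameter disc `{ζ : q + ζ v ∈ 𝔹ⁿ}`, holomorphic in its interior, agreeing with
`f(q + ζ v)` at parameters on the sphere. -/
def ExtendsAlongLine {n : ℕ} (f : EuclideanSpace ℂ (Fin n) → ℂ)
    (q v : EuclideanSpace ℂ (Fin n)) : Prop :=
  ∃ g : ℂ → ℂ,
    ContinuousOn g (closure {ζ : ℂ | q + ζ • v ∈ ball (0 : EuclideanSpace ℂ (Fin n)) 1}) ∧
    DifferentiableOn ℂ g {ζ : ℂ | q + ζ • v ∈ ball (0 : EuclideanSpace ℂ (Fin n)) 1} ∧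
    ∀ ζ : ℂ, q + ζ • v ∈ sphere (0 : EuclideanSpace ℂ (Fin n)) 1 → g ζ = f (q + ζ • v)

/-! ### Circle integrals depending on a parameter -/

/-- A circle integral whose integrand is jointly continuous and holomorphic in the parameter is
holomorphic in the parameter; the derivatives needed to differentiate under the integral are
controlled by the Cauchy estimate. -/
theorem circ_param_differentiableOn {U : Set ℂ} (hU : IsOpen U) {c : ℂ} {R : ℝ} (hR : 0 ≤ R)
    {G : ℂ → ℂ → ℂ} (hc : ContinuousOn (Function.uncurry G) (U ×ˢ sphere c R))
    (hd : ∀ ζ ∈ sphere c R, DifferentiableOn ℂ (fun z => G z ζ) U) :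
    DifferentiableOn ℂ (fun z => ∮ ζ in C(c, R), G z ζ) U := by
  intro z₀ hz₀
  refine DifferentiableAt.differentiableWithinAt ?_
  obtain ⟨ρ, hρ, hρU⟩ : ∃ ρ > 0, closedBall z₀ (2 * ρ) ⊆ U := by
    obtain ⟨ρ, hρ, h⟩ := Metric.nhds_basis_closedBall.mem_iff.1 (hU.mem_nhds hz₀)
    exact ⟨ρ / 2, by positivity, by simpa [mul_div_cancel₀] using h⟩
  obtain ⟨B, hB⟩ := ((isCompact_closedBall z₀ (2 * ρ)).prod
    (isCompact_sphere c R)).exists_bound_of_continuousOn (hc.mono (prod_mono hρU subset_rfl))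
  have hcont : ∀ z ∈ U, Continuous fun θ : ℝ => deriv (circleMap c R) θ • G z (circleMap c R θ) := by
    intro z hz
    have : Continuous fun θ : ℝ => G z (circleMap c R θ) :=
      hc.comp_continuous (f := fun θ : ℝ => (z, circleMap c R θ)) (by fun_prop)
        (fun θ => ⟨hz, circleMap_mem_sphere c hR θ⟩)
    have h2 : Continuous fun θ : ℝ => deriv (circleMap c R) θ := by
      simp only [deriv_circleMap]; fun_prop
    exact h2.smul this
  have hder : ∀ θ : ℝ, ∀ z ∈ U, HasDerivAt (fun z => deriv (circleMap c R) θ • G z (circleMap c R θ))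
      (deriv (circleMap c R) θ • deriv (fun z => G z (circleMap c R θ)) z) z := by
    intro θ z hz
    exact (((hd _ (circleMap_mem_sphere c hR θ)).differentiableAt
      (hU.mem_nhds hz)).hasDerivAt).const_smul (deriv (circleMap c R) θ)
  have key := intervalIntegral.hasDerivAt_integral_of_dominated_loc_of_deriv_le
    (μ := MeasureTheory.volume) (a := 0) (b := 2 * Real.pi)
    (F := fun z θ => deriv (circleMap c R) θ • G z (circleMap c R θ))
    (F' := fun z θ => deriv (circleMap c R) θ • deriv (fun z => G z (circleMap c R θ)) z)
    (x₀ := z₀) (s := ball z₀ ρ) (bound := fun _ => R * (B / ρ)) (ball_mem_nhds _ hρ)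
    (by
      filter_upwards [hU.mem_nhds hz₀] with z hz
      exact (hcont z hz).aestronglyMeasurable)
    ((hcont z₀ hz₀).intervalIntegrable _ _)
    (by
      -- the derivative in the parameter is measurable in `θ` as a limit of difference quotients
      have hq : ∀ k : ℕ, z₀ + ((ρ / (k + 1) : ℝ) : ℂ) ∈ U := by
        intro k
        apply hρU
        rw [mem_closedBall, dist_eq_norm, add_sub_cancel_left, Complex.norm_real, Real.norm_eq_abs,
          abs_of_pos (by positivity), div_le_iff₀ (by positivity)]
        nlinarith [(Nat.cast_nonneg k : (0 : ℝ) ≤ k)]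
      refine aestronglyMeasurable_of_tendsto_ae Filter.atTop (f := fun (k : ℕ) (θ : ℝ) =>
        (((ρ / (k + 1) : ℝ) : ℂ))⁻¹ • (deriv (circleMap c R) θ • G (z₀ + ((ρ / (k + 1) : ℝ) : ℂ))
          (circleMap c R θ) - deriv (circleMap c R) θ • G z₀ (circleMap c R θ))) ?_ ?_
      · intro k
        exact (((hcont _ (hq k)).sub (hcont _ hz₀)).const_smul
          (((ρ / (k + 1) : ℝ) : ℂ))⁻¹).aestronglyMeasurable
      · refine Filter.Eventually.of_forall fun θ => ?_
        have h1 := (hder θ z₀ hz₀).tendsto_slope_zero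
        refine h1.comp (tendsto_nhdsWithin_iff.2 ⟨?_, ?_⟩)
        · have : Filter.Tendsto (fun k : ℕ => ρ / ((k : ℝ) + 1)) Filter.atTop (nhds 0) :=
            tendsto_const_div_atTop_nhds_zero_nat ρ |>.comp (Filter.tendsto_add_atTop_nat 1) |>.congr
              (fun k => by simp)
          have h2 := (Complex.continuous_ofReal.tendsto 0).comp this
          rwa [Complex.ofReal_zero] at h2
        · refine Filter.Eventually.of_forall fun k => ?_
          have : (0 : ℝ) < ρ / ((k : ℝ) + 1) := by positivity
          exact Complex.ofReal_ne_zero.2 this.ne')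
    (by
      refine Filter.Eventually.of_forall fun θ _ z hz => ?_
      rw [norm_smul]
      have h1 : ‖deriv (circleMap c R) θ‖ = R := by
        simp [deriv_circleMap, abs_of_nonneg hR]
      rw [h1]
      refine mul_le_mul_of_nonneg_left ?_ hR
      have hsub : closedBall z ρ ⊆ closedBall z₀ (2 * ρ) := by
        apply closedBall_subset_closedBall'
        have := mem_ball.1 hz
        linarith
      refine Complex.norm_deriv_le_of_forall_mem_sphere_norm_le hρ ?_ ?_
      · refine DifferentiableOn.diffContOnCl ?_
        rw [closure_ball _ hρ.ne']
        exact (hd _ (circleMap_mem_sphere c hR θ)).mono (hsub.trans hρU)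
      · intro w hw
        exact hB (w, circleMap c R θ) ⟨hsub (sphere_subset_closedBall hw), circleMap_mem_sphere c hR θ⟩)
    (by simp)
    (by
      refine Filter.Eventually.of_forall fun θ _ z hz => ?_
      refine hder θ z (hρU ?_)
      exact ball_subset_closedBall.trans (closedBall_subset_closedBall (by linarith)) hz)
  exact key.2.differentiableAt

/-- Real version: a circle integral of a function that is `C¹` near `{p} × circle` is real
differentiable in the parameter at `p`. -/
theorem circ_param_real_differentiableAt {E : Type*} [NormedAddCommGroup E] [NormedSpace ℝ E]
    {c : ℂ} {R : ℝ} (hR : 0 ≤ R) {G : E × ℂ → ℂ} {p : E}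
    (hG : ∀ ζ ∈ sphere c R, ContDiffAt ℝ 1 G (p, ζ)) :
    DifferentiableAt ℝ (fun q => ∮ ζ in C(c, R), G (q, ζ)) p := by
  -- by compactness of the circle, `G` is `C¹` with bounded derivative on a neighbourhood of
  -- `{p} × circle` of product form
  have hev : ∃ B : ℝ, ∀ᶠ q in nhds p, ∀ ζ ∈ sphere c R,
      ContDiffAt ℝ 1 G (q, ζ) ∧ ‖fderiv ℝ G (q, ζ)‖ ≤ B := by
    refine (isCompact_sphere c R).induction_on (p := fun S => ∃ B : ℝ, ∀ᶠ q in nhds p, ∀ ζ ∈ S,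
      ContDiffAt ℝ 1 G (q, ζ) ∧ ‖fderiv ℝ G (q, ζ)‖ ≤ B) ⟨0, by simp⟩ ?_ ?_ ?_
    · rintro S T hST ⟨B, hB⟩
      exact ⟨B, hB.mono fun q hq ζ hζ => hq ζ (hST hζ)⟩
    · rintro S T ⟨B, hB⟩ ⟨B', hB'⟩
      refine ⟨max B B', ?_⟩
      filter_upwards [hB, hB'] with q hq hq' ζ hζ
      rcases hζ with hζ | hζ
      · exact ⟨(hq ζ hζ).1, (hq ζ hζ).2.trans (le_max_left _ _)⟩
      · exact ⟨(hq' ζ hζ).1, (hq' ζ hζ).2.trans (le_max_right _ _)⟩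
    · intro ζ hζ
      have h1 := (hG ζ hζ).eventually (by simp)
      have h2 := ((hG ζ hζ).continuousAt_fderiv (by simp)).norm.eventually
        (Iio_mem_nhds (lt_add_one _))
      have h3 := h1.and h2
      rw [nhds_prod_eq, Filter.eventually_prod_iff] at h3
      obtain ⟨pa, hpa, pb, hpb, h⟩ := h3
      refine ⟨{ζ | pb ζ}, mem_nhdsWithin_of_mem_nhds hpb, ‖fderiv ℝ G (p, ζ)‖ + 1, ?_⟩
      filter_upwards [hpa] with q hq ζ' hζ'
      exact ⟨(h hq hζ').1, (h hq hζ').2.le⟩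
  obtain ⟨B, hB⟩ := hev
  have hmem := fun θ => circleMap_mem_sphere c hR θ
  have hder : ∀ q : E, (∀ ζ ∈ sphere c R, ContDiffAt ℝ 1 G (q, ζ)) → ∀ θ : ℝ,
      HasFDerivAt (fun q => deriv (circleMap c R) θ • G (q, circleMap c R θ))
        (deriv (circleMap c R) θ • (fderiv ℝ G (q, circleMap c R θ)).comp
          (ContinuousLinearMap.inl ℝ E ℂ)) q := by
    intro q hq θ
    have h1 := ((hq _ (hmem θ)).differentiableAt (by simp)).hasFDerivAt
    have h2 : HasFDerivAt (fun q : E => (q, circleMap c R θ)) (ContinuousLinearMap.inl ℝ E ℂ) q :=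
      hasFDerivAt_prodMk_left q _
    exact (h1.comp q h2).const_smul (deriv (circleMap c R) θ)
  have hdc : Continuous fun θ : ℝ => deriv (circleMap c R) θ := by
    simp only [deriv_circleMap]; fun_prop
  have hcont : ∀ q : E, (∀ ζ ∈ sphere c R, ContDiffAt ℝ 1 G (q, ζ)) →
      Continuous fun θ : ℝ => deriv (circleMap c R) θ • G (q, circleMap c R θ) := by
    intro q hq
    refine hdc.smul (continuous_iff_continuousAt.2 fun θ => ?_)
    exact ContinuousAt.comp (f := fun θ : ℝ => (q, circleMap c R θ)) (g := G)
      (hq _ (hmem θ)).continuousAt (by fun_prop)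
  obtain ⟨s, hs, hsB⟩ := hB.exists_mem
  have hp := hG
  have key := intervalIntegral.hasFDerivAt_integral_of_dominated_of_fderiv_le (𝕜 := ℝ)
    (μ := MeasureTheory.volume) (a := 0) (b := 2 * Real.pi)
    (F := fun q θ => deriv (circleMap c R) θ • G (q, circleMap c R θ))
    (F' := fun q θ => deriv (circleMap c R) θ • (fderiv ℝ G (q, circleMap c R θ)).comp
          (ContinuousLinearMap.inl ℝ E ℂ))
    (x₀ := p) (s := s) (bound := fun _ => R * (B * ‖ContinuousLinearMap.inl ℝ E ℂ‖)) hs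
    (by
      filter_upwards [hs] with q hq
      exact (hcont q fun ζ hζ => (hsB q hq ζ hζ).1).aestronglyMeasurable)
    ((hcont p hp).intervalIntegrable _ _)
    (by
      refine Continuous.aestronglyMeasurable ?_
      refine hdc.smul ?_
      refine Continuous.clm_comp (continuous_iff_continuousAt.2 fun θ => ?_) continuous_const
      exact ContinuousAt.comp (f := fun θ : ℝ => (p, circleMap c R θ)) (g := fderiv ℝ G)
        ((hG _ (hmem θ)).continuousAt_fderiv (by simp)) (by fun_prop))
    (by
      refine Filter.Eventually.of_forall fun θ _ q hq => ?_
      rw [norm_smul]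
      have h1 : ‖deriv (circleMap c R) θ‖ = R := by
        simp [deriv_circleMap, abs_of_nonneg hR]
      rw [h1]
      refine mul_le_mul_of_nonneg_left ?_ hR
      exact (ContinuousLinearMap.opNorm_comp_le _ _).trans
        (mul_le_mul_of_nonneg_right (hsB q hq _ (hmem θ)).2 (norm_nonneg _)))
    (by simp)
    (Filter.Eventually.of_forall fun θ _ q hq => hder q (fun ζ hζ => (hsB q hq ζ hζ).1) θ)
  exact key.differentiableAt

/-! ### Complexification of real-analytic functions -/

/-- The complex power series with the same coefficients as the real series `P`: each term is the
complex multilinear map taking the same values as `P m` on tuples of standard basis vectors. -/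
noncomputable def complexifiedSeries {d : ℕ} (P : FormalMultilinearSeries ℝ (Fin d → ℝ) ℂ) :
    FormalMultilinearSeries ℂ (Fin d → ℂ) ℂ := fun m =>
  ∑ i : Fin m → Fin d, P m (fun j => Pi.single (i j) 1) •
    (ContinuousMultilinearMap.mkPiAlgebra ℂ (Fin m) ℂ).compContinuousLinearMap
      (fun j => ContinuousLinearMap.proj (R := ℂ) (φ := fun _ : Fin d => ℂ) (i j))

/-- The factor `d ^ m` counts tuples of basis vectors; it shrinks the radius of convergence at most
by the factor `d`. -/
theorem complexifiedSeries_norm_le {d : ℕ} (P : FormalMultilinearSeries ℝ (Fin d → ℝ) ℂ) (m : ℕ) :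
    ‖complexifiedSeries P m‖ ≤ d ^ m * ‖P m‖ := by
  unfold complexifiedSeries
  refine (norm_sum_le _ _).trans ?_
  have : ∀ i ∈ (Finset.univ : Finset (Fin m → Fin d)), ‖P m (fun j => Pi.single (i j) 1) •
    (ContinuousMultilinearMap.mkPiAlgebra ℂ (Fin m) ℂ).compContinuousLinearMap
      (fun j => ContinuousLinearMap.proj (R := ℂ) (φ := fun _ : Fin d => ℂ) (i j))‖ ≤ ‖P m‖ := by
    intro i _
    refine (norm_smul_le (P m (fun j => Pi.single (i j) 1))
      ((ContinuousMultilinearMap.mkPiAlgebra ℂ (Fin m) ℂ).compContinuousLinearMap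
      (fun j => ContinuousLinearMap.proj (R := ℂ) (φ := fun _ : Fin d => ℂ) (i j)))).trans ?_
    have h1 : ‖P m (fun j => Pi.single (i j) 1)‖ ≤ ‖P m‖ := by
      refine ((P m).le_opNorm _).trans ?_
      refine mul_le_of_le_one_right (norm_nonneg _) (Finset.prod_le_one (fun _ _ => norm_nonneg _) ?_)
      intro j _
      rw [Pi.norm_single]; simp
    have h2 : ‖(ContinuousMultilinearMap.mkPiAlgebra ℂ (Fin m) ℂ).compContinuousLinearMap
      (fun j => ContinuousLinearMap.proj (R := ℂ) (φ := fun _ : Fin d => ℂ) (i j))‖ ≤ 1 := by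
      refine ContinuousMultilinearMap.opNorm_le_bound zero_le_one fun y => ?_
      simp only [ContinuousMultilinearMap.compContinuousLinearMap_apply,
        ContinuousMultilinearMap.mkPiAlgebra_apply, one_mul, norm_prod]
      exact Finset.prod_le_prod (fun _ _ => norm_nonneg _) fun j _ => norm_le_pi_norm (y j) (i j)
    calc _ ≤ ‖P m‖ * 1 := mul_le_mul h1 h2 (norm_nonneg _) (norm_nonneg _)
      _ = _ := mul_one _
  refine (Finset.sum_le_sum this).trans ?_
  simp

/-- On real points the complexified series has the terms of the original one. -/
theorem complexifiedSeries_ofReal {d : ℕ} (P : FormalMultilinearSeries ℝ (Fin d → ℝ) ℂ) (m : ℕ)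
    (x : Fin d → ℝ) :
    complexifiedSeries P m (fun _ i => (x i : ℂ)) = P m (fun _ => x) := by
  have hx : x = ∑ i, x i • Pi.single (M := fun _ => ℝ) i 1 := by
    ext k; simp [Finset.sum_apply, Pi.single_apply]
  have h1 : P m (fun _ => x) = P m (fun _ => ∑ i, x i • Pi.single (M := fun _ => ℝ) i 1) := by
    rw [← hx]
  rw [h1, ContinuousMultilinearMap.map_sum]
  simp only [complexifiedSeries, sum_apply,
    smul_apply, ContinuousMultilinearMap.compContinuousLinearMap_apply,
    ContinuousMultilinearMap.mkPiAlgebra_apply, ContinuousLinearMap.proj_apply]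
  refine Finset.sum_congr rfl fun i _ => ?_
  rw [ContinuousMultilinearMap.map_smul_univ]
  simp [mul_comm]

/-- A real-analytic germ on `ℝᵈ` is the restriction of a holomorphic germ on `ℂᵈ`. -/
theorem exists_complexification_pi {d : ℕ} {h : (Fin d → ℝ) → ℂ} (hh : AnalyticAt ℝ h 0) :
    ∃ Φ : (Fin d → ℂ) → ℂ, AnalyticAt ℂ Φ 0 ∧
      ∀ᶠ x : Fin d → ℝ in nhds 0, Φ (fun i => x i) = h x := by
  obtain ⟨P, r, hP⟩ := hh
  have hrad : 0 < P.radius := hP.r_pos.trans_le hP.r_le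
  obtain ⟨ρ, hρ0, hρ⟩ := ENNReal.lt_iff_exists_nnreal_btwn.1 hrad
  obtain ⟨C, hC, hCb⟩ := P.norm_mul_pow_le_of_lt_radius hρ
  have hρ0' : (0 : NNReal) < ρ := by exact_mod_cast hρ0
  have hrad' : 0 < (complexifiedSeries P).radius := by
    refine lt_of_lt_of_le (b := ((ρ / (d + 1) : NNReal) : ENNReal)) ?_ ?_
    · exact_mod_cast (by positivity)
    · refine FormalMultilinearSeries.le_radius_of_bound _ C fun m => ?_
      refine le_trans ?_ (hCb m)
      calc _ ≤ (d ^ m * ‖P m‖) * ((ρ / (d + 1) : NNReal) : ℝ) ^ m := by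
            gcongr; exact complexifiedSeries_norm_le P m
        _ = ‖P m‖ * ((d / (d + 1)) ^ m * ρ ^ m) := by push_cast; rw [div_pow, div_pow]; ring
        _ ≤ ‖P m‖ * (1 * ρ ^ m) := by
            gcongr
            refine pow_le_one₀ (by positivity) ?_
            rw [div_le_one (by positivity)]; linarith
        _ = _ := by ring
  have hΦ := (complexifiedSeries P).hasFPowerSeriesOnBall hrad'
  refine ⟨_, hΦ.analyticAt, ?_⟩
  have h1 : ∀ᶠ x : Fin d → ℝ in nhds 0, x ∈ eball (0 : Fin d → ℝ) r := eball_mem_nhds _ hP.r_pos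
  have hcont : Continuous fun x : Fin d → ℝ => (fun i => (x i : ℂ)) := by fun_prop
  have h2 : ∀ᶠ x : Fin d → ℝ in nhds 0, (fun i => (x i : ℂ)) ∈
      eball (0 : Fin d → ℂ) (complexifiedSeries P).radius := by
    refine hcont.continuousAt.eventually_mem ?_
    have h0 : (fun i => (((0 : Fin d → ℝ) i : ℝ) : ℂ)) = (0 : Fin d → ℂ) := by ext i; simp
    rw [h0]
    exact eball_mem_nhds _ hrad'
  filter_upwards [h1, h2] with x hx1 hx2
  have e1 := hP.hasSum hx1
  have e2 := hΦ.hasSum hx2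
  rw [zero_add] at e1 e2
  refine e2.unique ?_
  convert! e1 using 2 with m
  exact complexifiedSeries_ofReal P m x

/-- Complexification of `f` on the complex plane `p + α • v + β • η`, with `α`, `β` and their
conjugates replaced by four independent complex variables. -/
theorem exists_complexification_plane {E : Type*} [NormedAddCommGroup E] [NormedSpace ℂ E]
    {f : E → ℂ} {p : E} (hf : AnalyticAt ℝ f p) (v η : E) :
    ∃ ε > 0, ∃ C : ℝ, ∃ Φ : ℂ × ℂ × ℂ × ℂ → ℂ,
      AnalyticOnNhd ℂ Φ (ball 0 ε) ∧ (∀ q ∈ ball 0 ε, ‖Φ q‖ ≤ C) ∧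
      ∀ α β : ℂ, ‖α‖ < ε → ‖β‖ < ε →
        Φ (α, β, (starRingEnd ℂ) α, (starRingEnd ℂ) β) = f (p + α • v + β • η) := by
  let L : (Fin 4 → ℝ) → E := fun x =>
    p + ((x 0 • v + x 1 • (I • v)) + (x 2 • η + x 3 • (I • η)))
  have hL0 : L 0 = p := by simp [L]
  have hL : AnalyticAt ℝ (f ∘ L) 0 := by
    refine AnalyticAt.comp (by rwa [hL0]) ?_
    have hpr : ∀ i : Fin 4, AnalyticAt ℝ (fun x : Fin 4 → ℝ => x i) 0 := fun i =>
      (ContinuousLinearMap.proj (R := ℝ) (φ := fun _ : Fin 4 => ℝ) i).analyticAt 0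
    exact analyticAt_const.add ((((hpr 0).smul analyticAt_const).add ((hpr 1).smul analyticAt_const)).add
      (((hpr 2).smul analyticAt_const).add ((hpr 3).smul analyticAt_const)))
  obtain ⟨Ψ, hΨ, hΨh⟩ := exists_complexification_pi hL
  -- real and imaginary parts of `α`, `β` in terms of `(α, β, conj α, conj β)`
  let T : ℂ × ℂ × ℂ × ℂ → (Fin 4 → ℂ) := fun q =>
    ![(q.1 + q.2.2.1) / 2, (q.1 - q.2.2.1) / (2 * I),
      (q.2.1 + q.2.2.2) / 2, (q.2.1 - q.2.2.2) / (2 * I)]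
  have hT0 : T 0 = 0 := by ext i; fin_cases i <;> simp [T]
  have hT : AnalyticAt ℂ T 0 := by
    rw [analyticAt_pi_iff]
    intro i
    have c1 : AnalyticAt ℂ (fun q : ℂ × ℂ × ℂ × ℂ => q.1) 0 :=
      (ContinuousLinearMap.fst ℂ ℂ (ℂ × ℂ × ℂ)).analyticAt 0
    have c2 : AnalyticAt ℂ (fun q : ℂ × ℂ × ℂ × ℂ => q.2.1) 0 :=
      ((ContinuousLinearMap.fst ℂ ℂ (ℂ × ℂ)).comp
        (ContinuousLinearMap.snd ℂ ℂ (ℂ × ℂ × ℂ))).analyticAt 0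
    have c3 : AnalyticAt ℂ (fun q : ℂ × ℂ × ℂ × ℂ => q.2.2.1) 0 :=
      ((ContinuousLinearMap.fst ℂ ℂ ℂ).comp ((ContinuousLinearMap.snd ℂ ℂ (ℂ × ℂ)).comp
        (ContinuousLinearMap.snd ℂ ℂ (ℂ × ℂ × ℂ)))).analyticAt 0
    have c4 : AnalyticAt ℂ (fun q : ℂ × ℂ × ℂ × ℂ => q.2.2.2) 0 :=
      ((ContinuousLinearMap.snd ℂ ℂ ℂ).comp ((ContinuousLinearMap.snd ℂ ℂ (ℂ × ℂ)).comp
        (ContinuousLinearMap.snd ℂ ℂ (ℂ × ℂ × ℂ)))).analyticAt 0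
    fin_cases i
    · exact (c1.add c3).div analyticAt_const two_ne_zero
    · exact (c1.sub c3).div analyticAt_const (by simp)
    · exact (c2.add c4).div analyticAt_const two_ne_zero
    · exact (c2.sub c4).div analyticAt_const (by simp)
  have hΦ : AnalyticAt ℂ (Ψ ∘ T) 0 := AnalyticAt.comp (by rwa [hT0]) hT
  have hb : ∀ᶠ q in nhds (0 : ℂ × ℂ × ℂ × ℂ), ‖(Ψ ∘ T) q‖ ≤ ‖(Ψ ∘ T) 0‖ + 1 :=
    (hΦ.continuousAt.norm.eventually (Iio_mem_nhds (lt_add_one _))).mono fun q hq => le_of_lt hq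
  have hre : Continuous fun q : ℂ × ℂ => (![q.1.re, q.1.im, q.2.re, q.2.im] : Fin 4 → ℝ) := by
    refine continuous_pi fun i => ?_
    fin_cases i <;> simp <;> fun_prop
  have hev : ∀ᶠ q in nhds (0 : ℂ × ℂ), Ψ (fun i => ((![q.1.re, q.1.im, q.2.re, q.2.im] : Fin 4 → ℝ) i : ℂ))
      = f (L ![q.1.re, q.1.im, q.2.re, q.2.im]) := by
    refine hre.continuousAt.eventually (p := fun x => Ψ (fun i => (x i : ℂ)) = f (L x)) ?_
    have h0 : (fun q : ℂ × ℂ => (![q.1.re, q.1.im, q.2.re, q.2.im] : Fin 4 → ℝ)) 0 = 0 := by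
      ext i; fin_cases i <;> simp
    rw [h0]
    exact hΨh
  obtain ⟨ε₁, hε₁, h1⟩ := Metric.eventually_nhds_iff_ball.1 (hΦ.eventually_analyticAt.and hb)
  obtain ⟨ε₂, hε₂, h2⟩ := Metric.eventually_nhds_iff_ball.1 hev
  refine ⟨min ε₁ ε₂, lt_min hε₁ hε₂, _, Ψ ∘ T, fun q hq => (h1 q ?_).1, fun q hq => (h1 q ?_).2, ?_⟩
  · exact ball_subset_ball (min_le_left _ _) hq
  · exact ball_subset_ball (min_le_left _ _) hq
  · intro α β hα hβ
    have h3 := h2 (α, β) (by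
      rw [mem_ball_zero_iff, Prod.norm_def]
      exact max_lt (hα.trans_le (min_le_right _ _)) (hβ.trans_le (min_le_right _ _)))
    have e1 : T (α, β, (starRingEnd ℂ) α, (starRingEnd ℂ) β) =
        fun i => ((![α.re, α.im, β.re, β.im] : Fin 4 → ℝ) i : ℂ) := by
      ext i
      fin_cases i <;> simp [T, Complex.add_conj, Complex.sub_conj]
      all_goals field_simp
    have e2 : L ![α.re, α.im, β.re, β.im] = p + α • v + β • η := by
      have : ∀ (z : ℂ) (w : E), z.re • w + z.im • (I • w) = z • w := by
        intro z w
        conv_rhs => rw [← Complex.re_add_im z, add_smul, mul_smul]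
        simp
      simp only [L, Matrix.cons_val]
      rw [this, this, add_assoc]
    rw [Function.comp_apply, e1, h3, e2]

/-! ### Boundary uniqueness and Cauchy coefficients -/

/-- Boundary uniqueness on the lens cut out of the disc `|s ζ - 1| < 1` by `|ζ| < δ`: a function
vanishing on the part of the boundary lying on the circle vanishes near `0`. -/
theorem eq_zero_of_eq_zero_on_arc {s δ : ℝ} (hs : 0 < s) {h : ℂ → ℂ}
    (hc : ContinuousOn h ({ζ : ℂ | ‖(s : ℂ) * ζ - 1‖ ≤ 1} ∩ closedBall 0 δ))
    (hd : DifferentiableOn ℂ h ({ζ : ℂ | ‖(s : ℂ) * ζ - 1‖ < 1} ∩ ball 0 δ))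
    (hz : ∀ ζ : ℂ, ‖(s : ℂ) * ζ - 1‖ = 1 → ‖ζ‖ ≤ δ → h ζ = 0)
    {ζ : ℂ} (h1 : ‖(s : ℂ) * ζ - 1‖ < 1) (h2 : ‖ζ‖ < δ) (h3 : ‖ζ‖ < s * δ ^ 2 / 2) : h ζ = 0 := by
  set U : Set ℂ := {ζ : ℂ | ‖(s : ℂ) * ζ - 1‖ < 1} ∩ ball 0 δ with hU
  set K : Set ℂ := {ζ : ℂ | ‖(s : ℂ) * ζ - 1‖ ≤ 1} ∩ closedBall 0 δ with hK
  have hKclosed : IsClosed {ζ : ℂ | ‖(s : ℂ) * ζ - 1‖ ≤ 1} := isClosed_le (by fun_prop) (by fun_prop)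
  have hKc : IsCompact K := (isCompact_closedBall (0 : ℂ) δ).inter_left hKclosed
  have hUo : IsOpen U := (isOpen_lt (by fun_prop) (by fun_prop)).inter isOpen_ball
  have hUK : U ⊆ K := fun z hz =>
    ⟨(show ‖(s : ℂ) * z - 1‖ < 1 from hz.1).le, ball_subset_closedBall hz.2⟩
  have hclU : closure U ⊆ K := closure_minimal hUK hKc.isClosed
  obtain ⟨M, hM⟩ := hKc.exists_bound_of_continuousOn hc
  have hM0 : 0 ≤ M := (norm_nonneg _).trans (hM ζ (hUK ⟨h1, by simpa using h2⟩))
  -- Maximum principle for `h z * exp (-k z)`: on the arc `|z| = δ` inside the disc one has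
  -- `Re z ≥ s δ² / 2`, so the damping factor beats its value at `ζ` as `k → ∞`.
  have hbound : ∀ k : ℕ, ‖h ζ‖ ≤ M * Real.exp (k * (ζ.re - s * δ ^ 2 / 2)) := by
    intro k
    have hmax := Complex.norm_le_of_forall_mem_frontier_norm_le (U := U)
      (f := fun z => h z * Complex.exp (-k * z)) (C := M * Real.exp (-k * (s * δ ^ 2 / 2)))
      (isBounded_ball.subset inter_subset_right)
      ⟨hd.mul (by fun_prop), (hc.mono hclU).mul (by fun_prop)⟩
      (by
        intro z hzf
        have hzK : z ∈ K := hclU hzf.1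
        have hzU : z ∉ U := by rw [hUo.frontier_eq] at hzf; exact hzf.2
        rw [norm_mul, Complex.norm_exp]
        by_cases hcirc : ‖(s : ℂ) * z - 1‖ = 1
        · rw [hz z hcirc (by simpa using hzK.2)]
          simp; positivity
        · have hlt : ‖(s : ℂ) * z - 1‖ < 1 := lt_of_le_of_ne hzK.1 hcirc
          have hzδ : ‖z‖ = δ := by
            by_contra hne
            have : ‖z‖ ≤ δ := by simpa using hzK.2
            exact hzU ⟨hlt, by simpa using lt_of_le_of_ne this hne⟩
          have hre : s * δ ^ 2 / 2 ≤ z.re := by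
            have e1 : ‖(s : ℂ) * z - 1‖ ^ 2 ≤ 1 := by
              have := norm_nonneg ((s : ℂ) * z - 1); nlinarith
            rw [Complex.sq_norm, Complex.normSq_apply] at e1
            have e2 : z.re * z.re + z.im * z.im = δ ^ 2 := by
              rw [← hzδ, Complex.sq_norm, Complex.normSq_apply]
            simp at e1
            have e3 : s * (s * (z.re * z.re + z.im * z.im)) ≤ s * (2 * z.re) := by nlinarith
            rw [e2] at e3
            have := le_of_mul_le_mul_left e3 hs
            linarith
          refine mul_le_mul (hM z hzK) (Real.exp_le_exp.2 ?_) (Real.exp_pos _).le hM0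
          simp only [Complex.mul_re, Complex.neg_re, Complex.natCast_re, Complex.neg_im,
            Complex.natCast_im, neg_zero, zero_mul, sub_zero]
          have : (0 : ℝ) ≤ k := Nat.cast_nonneg k
          nlinarith)
      (subset_closure (show ζ ∈ U from ⟨h1, by simpa using h2⟩))
    rw [norm_mul, Complex.norm_exp] at hmax
    simp only [Complex.mul_re, Complex.neg_re, Complex.natCast_re, Complex.neg_im,
            Complex.natCast_im, neg_zero, zero_mul, sub_zero] at hmax
    have e : Real.exp (k * (ζ.re - s * δ ^ 2 / 2)) =
        Real.exp (-k * (s * δ ^ 2 / 2)) / Real.exp (-k * ζ.re) := by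
      rw [← Real.exp_sub]; ring_nf
    rw [e, mul_div_assoc', le_div_iff₀ (Real.exp_pos _)]
    exact hmax
  have hneg : ζ.re - s * δ ^ 2 / 2 < 0 := by
    have := (Complex.abs_re_le_norm ζ); have := le_abs_self ζ.re; linarith
  have hlim : Filter.Tendsto (fun k : ℕ => M * Real.exp (k * (ζ.re - s * δ ^ 2 / 2)))
      Filter.atTop (nhds 0) := by
    have := (Real.tendsto_exp_atBot.comp
      (tendsto_natCast_atTop_atTop.atTop_mul_const_of_neg hneg)).const_mul M
    simpa using this
  exact norm_le_zero_iff.1 (ge_of_tendsto' hlim hbound)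

/-- Boundary uniqueness on an annulus: a function vanishing on the outer circle vanishes. -/
theorem eq_zero_of_eq_zero_on_circle {q : ℝ} (hq : 0 < q) {h : ℂ → ℂ}
    (hc : ContinuousOn h {y : ℂ | q ≤ ‖y‖ ∧ ‖y‖ ≤ 1})
    (hd : DifferentiableOn ℂ h {y : ℂ | q < ‖y‖ ∧ ‖y‖ < 1})
    (hz : ∀ y : ℂ, ‖y‖ = 1 → h y = 0) {y : ℂ} (h1 : q < ‖y‖) (h2 : ‖y‖ < 1) : h y = 0 := by
  set U : Set ℂ := {y : ℂ | q < ‖y‖ ∧ ‖y‖ < 1} with hU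
  set K : Set ℂ := {y : ℂ | q ≤ ‖y‖ ∧ ‖y‖ ≤ 1} with hK
  have hKclosed : IsClosed K :=
    (isClosed_le continuous_const continuous_norm).inter (isClosed_le continuous_norm continuous_const)
  have hKc : IsCompact K := (isCompact_closedBall (0 : ℂ) 1).of_isClosed_subset hKclosed
    (fun z hz => by simpa using hz.2)
  have hUo : IsOpen U :=
    (isOpen_lt continuous_const continuous_norm).inter (isOpen_lt continuous_norm continuous_const)
  have hUK : U ⊆ K := fun z hz => ⟨hz.1.le, hz.2.le⟩
  have hclU : closure U ⊆ K := closure_minimal hUK hKclosed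
  obtain ⟨M, hM⟩ := hKc.exists_bound_of_continuousOn hc
  have hM0 : 0 ≤ M := (norm_nonneg _).trans (hM y (hUK ⟨h1, h2⟩))
  -- maximum principle for `h z * z ^ k`, whose weight is smallest on the inner circle
  have hbound : ∀ k : ℕ, ‖h y‖ ≤ M * (q / ‖y‖) ^ k := by
    intro k
    have hmax := Complex.norm_le_of_forall_mem_frontier_norm_le (U := U)
      (f := fun z => h z * z ^ k) (C := M * q ^ k)
      (hKc.isBounded.subset hUK)
      ⟨hd.mul (by fun_prop), (hc.mono hclU).mul (by fun_prop)⟩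
      (by
        intro z hzf
        have hzK : z ∈ K := hclU hzf.1
        have hzU : z ∉ U := by rw [hUo.frontier_eq] at hzf; exact hzf.2
        rw [norm_mul, norm_pow]
        by_cases hcirc : ‖z‖ = 1
        · rw [hz z hcirc]
          simp; positivity
        · have hzq : ‖z‖ = q := by
            by_contra hne
            exact hzU ⟨lt_of_le_of_ne hzK.1 (Ne.symm hne), lt_of_le_of_ne hzK.2 hcirc⟩
          rw [hzq]
          exact mul_le_mul_of_nonneg_right (hM z hzK) (by positivity))
      (subset_closure (show y ∈ U from ⟨h1, h2⟩))
    rw [norm_mul, norm_pow] at hmax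
    rw [div_pow, mul_div_assoc', le_div_iff₀ (by have := hq.trans h1; positivity)]
    exact hmax
  have hlim : Filter.Tendsto (fun k : ℕ => M * (q / ‖y‖) ^ k) Filter.atTop (nhds 0) := by
    have := (tendsto_pow_atTop_nhds_zero_of_lt_one (r := q / ‖y‖) (by positivity)
      (by rw [div_lt_one (hq.trans h1)]; exact h1)).const_mul M
    simpa using this
  exact norm_le_zero_iff.1 (ge_of_tendsto' hlim hbound)

/-- Let `k` be holomorphic on `|ζ| ≤ r` outside the hole `|s ζ - 1| < 1 / 2`, and suppose that its
restriction to the circle `|s ζ - 1| = 1` extends holomorphically into the disc.  Then the Cauchy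
coefficients of `k` over `|ζ| = r` are its Taylor coefficients at the point `0` of that circle. -/
theorem circleIntegral_eq_iteratedDeriv_of_extends {s r : ℝ} (hs : 0 < s) (hr : 0 < r)
    (hsr : 3 ≤ s * r) {k g : ℂ → ℂ}
    (hk : ∀ ζ : ℂ, ‖ζ‖ ≤ r → 1 / 2 ≤ ‖(s : ℂ) * ζ - 1‖ → DifferentiableAt ℂ k ζ)
    (hgc : ContinuousOn g {ζ : ℂ | ‖(s : ℂ) * ζ - 1‖ ≤ 1})
    (hgd : DifferentiableOn ℂ g {ζ : ℂ | ‖(s : ℂ) * ζ - 1‖ < 1})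
    (hgk : ∀ ζ : ℂ, ‖(s : ℂ) * ζ - 1‖ = 1 → g ζ = k ζ) (m : ℕ) :
    ∮ z in C(0, r), (1 / (z - 0) ^ (m + 1)) • k z =
      (2 * Real.pi * I / m.factorial) • iteratedDeriv m k 0 := by
  have hsC : (s : ℂ) ≠ 0 := by exact_mod_cast hs.ne'
  have hin : ∀ ζ : ℂ, ‖(s : ℂ) * ζ - 1‖ ≤ 1 → ‖ζ‖ ≤ r := by
    intro ζ h
    have h1 : ‖(s : ℂ) * ζ‖ ≤ 2 := by
      calc ‖(s : ℂ) * ζ‖ = ‖((s : ℂ) * ζ - 1) + 1‖ := by ring_nf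
        _ ≤ ‖(s : ℂ) * ζ - 1‖ + ‖(1 : ℂ)‖ := norm_add_le _ _
        _ ≤ 2 := by rw [norm_one]; linarith
    rw [norm_mul, Complex.norm_real, Real.norm_of_nonneg hs.le] at h1
    by_contra! hlt
    nlinarith
  have hinv : ∀ y : ℂ, (s : ℂ) * ((y + 1) / s) - 1 = y := by
    intro y; field_simp; ring
  -- uniqueness on the annulus, in the coordinate `y = s ζ - 1`
  have hagree : ∀ ζ : ℂ, 1 / 2 < ‖(s : ℂ) * ζ - 1‖ → ‖(s : ℂ) * ζ - 1‖ ≤ 1 → g ζ = k ζ := by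
    intro ζ h1 h2
    rcases h2.eq_or_lt with h2 | h2
    · exact hgk ζ h2
    have := eq_zero_of_eq_zero_on_circle (q := 1 / 2) (by norm_num)
      (h := fun y => g ((y + 1) / s) - k ((y + 1) / s))
      (by
        refine ContinuousOn.sub (hgc.comp (by fun_prop) fun y hy => ?_) ?_
        · simpa [hinv] using hy.2
        · intro y hy
          refine ContinuousAt.continuousWithinAt ?_
          refine ContinuousAt.comp (g := k) (f := fun y : ℂ => (y + 1) / s) ?_ (by fun_prop)
          exact (hk _ (hin _ (by rw [hinv]; exact hy.2)) (by rw [hinv]; exact hy.1)).continuousAt)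
      (by
        refine DifferentiableOn.sub (hgd.comp (by fun_prop) fun y hy => ?_) ?_
        · simpa [hinv] using hy.2
        · intro y hy
          refine DifferentiableAt.differentiableWithinAt ?_
          refine DifferentiableAt.comp (g := k) (f := fun y : ℂ => (y + 1) / s) y ?_ (by fun_prop)
          exact hk _ (hin _ (by rw [hinv]; exact hy.2.le)) (by rw [hinv]; exact hy.1.le))
      (by
        intro y hy
        rw [hgk _ (by rw [hinv]; exact hy), sub_self])
      h1 h2
    have e : ((s : ℂ) * ζ - 1 + 1) / s = ζ := by field_simp; ring
    simp only [e] at this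
    exact sub_eq_zero.1 this
  have hcn : Continuous fun ζ : ℂ => ‖(s : ℂ) * ζ - 1‖ := by fun_prop
  classical
  -- the hole of `k` filled by `g`; the two pieces agree on `1 / 2 < |s ζ - 1| ≤ 1`, so `G` is
  -- holomorphic on the whole disc `|ζ| ≤ r`, and it is `k` both near `0` and on `|ζ| = r`
  let G : ℂ → ℂ := fun ζ => if ‖(s : ℂ) * ζ - 1‖ ≤ 3 / 4 then g ζ else k ζ
  have hGk : ∀ ζ : ℂ, 3 / 4 < ‖(s : ℂ) * ζ - 1‖ → G =ᶠ[nhds ζ] k := by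
    intro ζ hζ
    filter_upwards [hcn.continuousAt.eventually (Ioi_mem_nhds hζ)] with z hz
    have hz' : 3 / 4 < ‖(s : ℂ) * z - 1‖ := hz
    simp only [G, if_neg (not_le.2 hz')]
  have hGd : DifferentiableOn ℂ G (closedBall 0 r) := by
    intro ζ hζ
    refine DifferentiableAt.differentiableWithinAt ?_
    by_cases h : ‖(s : ℂ) * ζ - 1‖ < 1
    · have hev : G =ᶠ[nhds ζ] g := by
        filter_upwards [hcn.continuousAt.eventually (Iio_mem_nhds h)] with z hz
        have hz' : ‖(s : ℂ) * z - 1‖ < 1 := hz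
        by_cases hz2 : ‖(s : ℂ) * z - 1‖ ≤ 3 / 4
        · simp only [G, if_pos hz2]
        · simp only [G, if_neg hz2]
          exact (hagree z (by linarith [not_le.1 hz2]) hz'.le).symm
      exact (hgd.differentiableAt ((isOpen_lt hcn continuous_const).mem_nhds h)).congr_of_eventuallyEq hev
    · have h := not_lt.1 h
      exact (hk ζ (by simpa using hζ) (by linarith)).congr_of_eventuallyEq (hGk ζ (by linarith))
  have hcau := hGd.circleIntegral_one_div_sub_center_pow_smul hr m
  rw [(hGk 0 (by norm_num)).iteratedDeriv_eq] at hcau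
  rw [← hcau]
  refine circleIntegral.integral_congr hr.le fun z hz => ?_
  have hz1 : ‖z‖ = r := by simpa using hz
  have hz2 : 3 / 4 < ‖(s : ℂ) * z - 1‖ := by
    have e1 : ‖(s : ℂ) * z‖ - ‖(1 : ℂ)‖ ≤ ‖(s : ℂ) * z - 1‖ := norm_sub_norm_le _ _
    rw [norm_mul, Complex.norm_real, Real.norm_of_nonneg hs.le, hz1, norm_one] at e1
    linarith
  simp only [(hGk z hz2).eq_of_nhds]

/-! ### The complexified function and its Taylor coefficients -/

/-- The complexification `Φ` of `f` evaluated at `α = ζ`, `β = ζ l`, with `conj ζ` replaced by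
`ζ* = ζ / (N l m ζ - 1)` and `conj (ζ l)` by `ζ* m`.  When `m = conj l`, `N l m = ‖v + l • η‖²` and
`ζ` lies on the circle `|N l m ζ - 1| = 1`, these substitutions are identities, and the value is
`f (p + ζ • (v + l • η))`. -/
noncomputable def KK (Φ : ℂ × ℂ × ℂ × ℂ → ℂ) (N : ℂ → ℂ → ℂ) (l m ζ : ℂ) : ℂ :=
  Φ (ζ, ζ * l, ζ / (N l m * ζ - 1), ζ / (N l m * ζ - 1) * m)

/-- The arguments of `Φ` in `KK Φ N l m ζ` lie in the ball of radius `ε` on which `Φ` is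
holomorphic, and the denominator does not vanish. -/
structure Good (N : ℂ → ℂ → ℂ) (ε : ℝ) (l m ζ : ℂ) : Prop where
  h1 : ‖ζ‖ < ε
  h2 : ‖ζ * l‖ < ε
  h3 : N l m * ζ - 1 ≠ 0
  h4 : ‖ζ / (N l m * ζ - 1)‖ < ε
  h5 : ‖ζ / (N l m * ζ - 1) * m‖ < ε

theorem Good.mem_ball {N : ℂ → ℂ → ℂ} {ε : ℝ} {l m ζ : ℂ} (h : Good N ε l m ζ) :
    ((ζ, ζ * l, ζ / (N l m * ζ - 1), ζ / (N l m * ζ - 1) * m) : ℂ × ℂ × ℂ × ℂ) ∈ ball 0 ε := by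
  rw [mem_ball_zero_iff]
  simp only [Prod.norm_def, max_lt_iff]
  exact ⟨h.h1, h.h2, h.h4, h.h5⟩

theorem KK_differentiableAt {Φ : ℂ × ℂ × ℂ × ℂ → ℂ} {N : ℂ → ℂ → ℂ} {ε : ℝ}
    (hΦ : AnalyticOnNhd ℂ Φ (ball 0 ε)) (hN : Differentiable ℂ fun x : ℂ × ℂ => N x.1 x.2)
    {W : Type*} [NormedAddCommGroup W] [NormedSpace ℂ W] {lf mf zf : W → ℂ} {w : W}
    (hl : DifferentiableAt ℂ lf w) (hm : DifferentiableAt ℂ mf w) (hz : DifferentiableAt ℂ zf w)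
    (hg : Good N ε (lf w) (mf w) (zf w)) :
    DifferentiableAt ℂ (fun w => KK Φ N (lf w) (mf w) (zf w)) w := by
  have hNw : DifferentiableAt ℂ (fun w => N (lf w) (mf w)) w :=
    DifferentiableAt.comp w (g := fun x : ℂ × ℂ => N x.1 x.2) (f := fun w => (lf w, mf w))
      (hN _) (hl.prodMk hm)
  have hq : DifferentiableAt ℂ (fun w => zf w / (N (lf w) (mf w) * zf w - 1)) w := by
    simp only [div_eq_mul_inv]
    exact hz.mul (((hNw.mul hz).sub_const 1).fun_inv hg.h3)
  exact DifferentiableAt.comp w (g := Φ)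
    (f := fun w => (zf w, zf w * lf w, zf w / (N (lf w) (mf w) * zf w - 1),
      zf w / (N (lf w) (mf w) * zf w - 1) * mf w))
    (hΦ _ hg.mem_ball).differentiableAt
    (hz.prodMk ((hz.mul hl).prodMk (hq.prodMk (hq.mul hm))))

/-- For `l`, `m` in a bounded set, `KK l m` is defined on a fixed neighbourhood of `ζ = 0`. -/
theorem exists_good_of_bounded {N : ℂ → ℂ → ℂ} {ε : ℝ} (hε : 0 < ε)
    (hN : Differentiable ℂ fun x : ℂ × ℂ => N x.1 x.2) (M : ℝ) :
    ∃ δ > 0, ∀ l m ζ : ℂ, ‖l‖ ≤ M → ‖m‖ ≤ M → ‖ζ‖ ≤ δ → Good N ε l m ζ := by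
  obtain ⟨B, hB⟩ := (isCompact_closedBall (0 : ℂ × ℂ) M).exists_bound_of_continuousOn
    hN.continuous.continuousOn
  refine ⟨min (1 / (2 * (|B| + 1))) (ε / (4 * (|M| + 1))), by positivity, ?_⟩
  intro l m ζ hl hm hζ
  have hNB : ‖N l m‖ ≤ |B| := (hB (l, m) (by simp [Prod.norm_def, hl, hm])).trans (le_abs_self B)
  have hM : 0 ≤ |M| := abs_nonneg M
  have hl := hl.trans (le_abs_self M)
  have hm := hm.trans (le_abs_self M)
  have hζ1 : ‖ζ‖ * (2 * (|B| + 1)) ≤ 1 := by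
    rw [← le_div_iff₀ (by positivity)]; exact hζ.trans (min_le_left _ _)
  have hζ2 : ‖ζ‖ * (4 * (|M| + 1)) ≤ ε := by
    rw [← le_div_iff₀ (by positivity)]; exact hζ.trans (min_le_right _ _)
  have hz0 := norm_nonneg ζ
  have hden : 1 / 2 ≤ ‖N l m * ζ - 1‖ := by
    have e1 : ‖(1 : ℂ)‖ - ‖N l m * ζ‖ ≤ ‖1 - N l m * ζ‖ := norm_sub_norm_le _ _
    rw [norm_sub_rev, norm_one, norm_mul] at e1
    nlinarith [mul_le_mul_of_nonneg_right hNB hz0]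
  have hq : ‖ζ / (N l m * ζ - 1)‖ ≤ 2 * ‖ζ‖ := by
    rw [norm_div, div_le_iff₀ (by linarith)]
    nlinarith
  have hq0 := norm_nonneg (ζ / (N l m * ζ - 1))
  have a1 : ‖ζ‖ * |M| ≤ ε / 4 := by nlinarith
  refine ⟨by nlinarith, ?_, ?_, by nlinarith, ?_⟩
  · rw [norm_mul]; nlinarith [mul_le_mul_of_nonneg_left hl hz0]
  · intro h; rw [h, norm_zero] at hden; linarith
  · rw [norm_mul]; nlinarith [mul_le_mul hq hm (norm_nonneg m) (by positivity)]

/-- For `|l|` in `[R, 2R]` and all `|m| ≥ R`, one radius `r` works: `KK l m` is defined for `|ζ| ≤ r`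
away from its pole, and the pole lies well inside `|ζ| < r`.  Away from the pole `|ζ*| ≤ 3 / |N|`,
so the growth `|N| ≥ κ |l| |m|` keeps `ζ* m` small however large `m` is. -/
theorem exists_good_of_large {N : ℂ → ℂ → ℂ} {ε : ℝ} (hε : 0 < ε) {κ R₀ : ℝ} (hκ : 0 < κ)
    (hgrow : ∀ l m : ℂ, R₀ ≤ ‖l‖ → R₀ ≤ ‖m‖ → κ * (‖l‖ * ‖m‖) ≤ ‖N l m‖) :
    ∃ R > 0, ∃ r > 0, ∀ l m : ℂ, R ≤ ‖l‖ → ‖l‖ ≤ 2 * R → R ≤ ‖m‖ →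
      3 ≤ ‖N l m‖ * r ∧ ∀ ζ : ℂ, ‖ζ‖ ≤ r → 1 / 2 ≤ ‖N l m * ζ - 1‖ → Good N ε l m ζ := by
  -- with `r = ε / (4 R)` the requirement `|N| r ≥ 3` reads `κ R ε ≥ 12`, and `|ζ*| |m| ≤ 3 / (κ R)`
  -- must be below `ε`
  set R := max 1 (max R₀ (13 / (κ * ε))) with hRdef
  have hR1 : 1 ≤ R := le_max_left _ _
  have hR0 : R₀ ≤ R := (le_max_left _ _).trans (le_max_right _ _)
  have hR2 : 13 ≤ R * (κ * ε) := by
    rw [← div_le_iff₀ (by positivity)]; exact (le_max_right _ _).trans (le_max_right _ _)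
  clear_value R
  have hRpos : 0 < R := by linarith
  refine ⟨R, hRpos, ε / (4 * R), by positivity, fun l m hl hl2 hm => ?_⟩
  have hg := hgrow l m (hR0.trans hl) (hR0.trans hm)
  have hm0 : 0 < ‖m‖ := hRpos.trans_le hm
  have hNm : κ * R * ‖m‖ ≤ ‖N l m‖ := by
    refine le_trans ?_ hg
    have := mul_le_mul_of_nonneg_right hl hm0.le
    nlinarith
  have hNR : κ * R * R ≤ ‖N l m‖ := le_trans (by gcongr) hNm
  have hN0 : 0 < ‖N l m‖ := lt_of_lt_of_le (by positivity) hNR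
  refine ⟨?_, fun ζ hζ hden => ?_⟩
  · rw [mul_div_assoc', le_div_iff₀ (by positivity)]
    nlinarith [mul_le_mul_of_nonneg_right hNR hε.le]
  have hz0 := norm_nonneg ζ
  have hζR : ‖ζ‖ * (4 * R) ≤ ε := by rwa [← le_div_iff₀ (by positivity)]
  have hd0 : 0 < ‖N l m * ζ - 1‖ := by linarith
  have hq : ‖ζ / (N l m * ζ - 1)‖ * ‖N l m‖ ≤ 3 := by
    rw [norm_div, div_mul_eq_mul_div, div_le_iff₀ hd0]
    have e1 : ‖N l m * ζ‖ - ‖(1 : ℂ)‖ ≤ ‖N l m * ζ - 1‖ := norm_sub_norm_le _ _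
    rw [norm_mul, norm_one] at e1
    nlinarith
  set q := ‖ζ / (N l m * ζ - 1)‖ with hqdef
  have hq0 : 0 ≤ q := norm_nonneg _
  have h5 : q * ‖m‖ < ε := by
    have e1 : q * ‖m‖ * (κ * R) ≤ 3 := by
      have := mul_le_mul_of_nonneg_left hNm hq0
      nlinarith
    by_contra! hcon
    have := mul_le_mul_of_nonneg_right hcon (show 0 ≤ κ * R by positivity)
    nlinarith
  refine ⟨by nlinarith, ?_, norm_pos_iff.1 hd0, ?_, ?_⟩
  · rw [norm_mul]; nlinarith [mul_le_mul_of_nonneg_left hl2 hz0]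
  · have : q * 1 ≤ q * ‖m‖ := by gcongr; linarith
    rw [← hqdef]; linarith
  · rwa [norm_mul]

theorem KK_integral_differentiableOn {Φ : ℂ × ℂ × ℂ × ℂ → ℂ} {N : ℂ → ℂ → ℂ} {ε : ℝ}
    (hΦ : AnalyticOnNhd ℂ Φ (ball 0 ε)) (hN : Differentiable ℂ fun x : ℂ × ℂ => N x.1 x.2)
    {lf mf : ℂ → ℂ} (hl : Differentiable ℂ lf) (hm : Differentiable ℂ mf) {U : Set ℂ}
    (hU : IsOpen U) {r : ℝ} (hr : 0 < r)
    (hg : ∀ z ∈ U, ∀ ζ : ℂ, ‖ζ‖ = r → Good N ε (lf z) (mf z) ζ) (k : ℕ) :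
    DifferentiableOn ℂ
      (fun z => ∮ ζ in C(0, r), (1 / (ζ - 0) ^ (k + 1)) • KK Φ N (lf z) (mf z) ζ) U := by
  refine circ_param_differentiableOn hU hr.le ?_ ?_
  · rintro ⟨z, ζ⟩ ⟨hz, hζ⟩
    have hζr : ‖ζ‖ = r := by simpa using hζ
    have hζ0 : ζ ≠ 0 := by rintro rfl; simp at hζr; linarith
    have hK : ContinuousAt (fun x : ℂ × ℂ => KK Φ N (lf x.1) (mf x.1) x.2) (z, ζ) :=
      (KK_differentiableAt hΦ hN (lf := fun x : ℂ × ℂ => lf x.1) (mf := fun x : ℂ × ℂ => mf x.1)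
        (zf := Prod.snd) (hl.differentiableAt.comp _ differentiableAt_fst)
        (hm.differentiableAt.comp _ differentiableAt_fst) differentiableAt_snd
        (hg z hz ζ hζr)).continuousAt
    refine ContinuousAt.continuousWithinAt ?_
    refine ContinuousAt.smul (f := fun x : ℂ × ℂ => 1 / (x.2 - 0) ^ (k + 1)) ?_ hK
    refine ContinuousAt.div₀ continuousAt_const (by fun_prop) ?_
    simpa using hζ0
  · intro ζ hζ z hz
    have hζr : ‖ζ‖ = r := by simpa using hζ
    have hK : DifferentiableAt ℂ (fun z => KK Φ N (lf z) (mf z) ζ) z :=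
      KK_differentiableAt hΦ hN (zf := fun _ => ζ) (hl z) (hm z) (differentiableAt_const ζ)
        (hg z hz ζ hζr)
    exact (hK.const_smul (1 / (ζ - 0) ^ (k + 1))).differentiableWithinAt

/-- The Taylor coefficients of `KK l m` at `ζ = 0` are entire in `(l, m)`, expressed as holomorphy
along all entire curves `(lf, mf)`; locally they are integrals over a small circle. -/
theorem KK_coeff_differentiable {Φ : ℂ × ℂ × ℂ × ℂ → ℂ} {N : ℂ → ℂ → ℂ} {ε : ℝ} (hε : 0 < ε)
    (hΦ : AnalyticOnNhd ℂ Φ (ball 0 ε)) (hN : Differentiable ℂ fun x : ℂ × ℂ => N x.1 x.2)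
    {lf mf : ℂ → ℂ} (hl : Differentiable ℂ lf) (hm : Differentiable ℂ mf) (k : ℕ) :
    Differentiable ℂ
      (fun z => (2 * Real.pi * I / k.factorial) • iteratedDeriv k (KK Φ N (lf z) (mf z)) 0) := by
  intro z₀
  obtain ⟨A, hA⟩ := (isCompact_closedBall z₀ 1).exists_bound_of_continuousOn
    hl.continuous.continuousOn
  obtain ⟨B, hB⟩ := (isCompact_closedBall z₀ 1).exists_bound_of_continuousOn
    hm.continuous.continuousOn
  obtain ⟨δ, hδ, hgood⟩ := exists_good_of_bounded hε hN (max A B)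
  have hgood' : ∀ z ∈ ball z₀ 1, ∀ ζ : ℂ, ‖ζ‖ ≤ δ → Good N ε (lf z) (mf z) ζ := fun z hz ζ hζ =>
    hgood _ _ _ ((hA z (ball_subset_closedBall hz)).trans (le_max_left _ _))
      ((hB z (ball_subset_closedBall hz)).trans (le_max_right _ _)) hζ
  have hJ := KK_integral_differentiableOn hΦ hN hl hm isOpen_ball hδ
    (fun z hz ζ hζ => hgood' z hz ζ hζ.le) k
  have hev : ∀ z ∈ ball z₀ 1, (2 * Real.pi * I / k.factorial) •
      iteratedDeriv k (KK Φ N (lf z) (mf z)) 0 =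
      ∮ ζ in C(0, δ), (1 / (ζ - 0) ^ (k + 1)) • KK Φ N (lf z) (mf z) ζ := by
    intro z hz
    have hK : DifferentiableOn ℂ (KK Φ N (lf z) (mf z)) (closedBall 0 δ) := fun ζ hζ =>
      (KK_differentiableAt hΦ hN (lf := fun _ => lf z) (mf := fun _ => mf z) (zf := fun ζ => ζ)
        (differentiableAt_const _) (differentiableAt_const _) differentiableAt_id
        (hgood' z hz ζ (mem_closedBall_zero_iff.1 hζ))).differentiableWithinAt
    exact (hK.circleIntegral_one_div_sub_center_pow_smul hδ k).symm
  exact ((hJ.congr hev).differentiableAt (isOpen_ball.mem_nhds (mem_ball_self one_pos)))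

/-! ### Polarization -/

/-- A holomorphic function on a disc vanishing on the real diameter is zero. -/
theorem eq_zero_on_ball_of_real {f : ℂ → ℂ} {ρ : ℝ} (hρ : 0 < ρ)
    (hf : DifferentiableOn ℂ f (ball 0 ρ)) (h0 : ∀ x : ℝ, |x| < ρ → f x = 0) :
    ∀ z : ℂ, ‖z‖ < ρ → f z = 0 := by
  have ht : Filter.Tendsto (fun x : ℝ => (x : ℂ)) (nhdsWithin 0 {0}ᶜ) (nhdsWithin 0 {0}ᶜ) := by
    refine tendsto_nhdsWithin_iff.2 ⟨?_, ?_⟩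
    · have := Complex.continuous_ofReal.tendsto 0
      rw [Complex.ofReal_zero] at this
      exact this.mono_left nhdsWithin_le_nhds
    · filter_upwards [self_mem_nhdsWithin] with x hx
      simpa using hx
  have hev : ∀ᶠ x : ℝ in nhdsWithin 0 {0}ᶜ, f x = 0 := by
    filter_upwards [nhdsWithin_le_nhds (ball_mem_nhds (0 : ℝ) hρ)] with x hx
    exact h0 x (by simpa using hx)
  intro z hz
  exact (hf.analyticOnNhd isOpen_ball).eqOn_zero_of_preconnected_of_frequently_eq_zero
    (convex_ball 0 ρ).isPreconnected (mem_ball_self hρ) (ht.frequently hev.frequently)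
    (mem_ball_zero_iff.2 hz)

/-- Polarization: a function `D l m`, holomorphic for `R < |l| < 2 R`, `R < |m|`, which vanishes for
`m = conj l`, vanishes for `l` near `3 R / 2` and all `|m| > R`.  Holomorphy is assumed along
holomorphic curves `(lf, mf)`, the only form in which it is used. -/
theorem eq_zero_of_antidiagonal {D : ℂ → ℂ → ℂ} {R : ℝ} (hR : 0 < R)
    (hD : ∀ lf mf : ℂ → ℂ, Differentiable ℂ lf → Differentiable ℂ mf → ∀ U : Set ℂ, IsOpen U →
      (∀ z ∈ U, R < ‖lf z‖ ∧ ‖lf z‖ < 2 * R ∧ R < ‖mf z‖) →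
      DifferentiableOn ℂ (fun z => D (lf z) (mf z)) U)
    (h0 : ∀ l : ℂ, R < ‖l‖ → ‖l‖ < 2 * R → D l ((starRingEnd ℂ) l) = 0)
    {l m : ℂ} (hl : ‖l - (3 * R / 2 : ℝ)‖ < R / 8) (hm : R < ‖m‖) : D l m = 0 := by
  have hnear : ∀ w : ℂ, ‖w‖ < R / 4 → R < ‖((3 * R / 2 : ℝ) : ℂ) + w‖ ∧
      ‖((3 * R / 2 : ℝ) : ℂ) + w‖ < 2 * R := by
    intro w hw
    have e0 : ‖((3 * R / 2 : ℝ) : ℂ)‖ = 3 * R / 2 := by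
      rw [Complex.norm_real, Real.norm_of_nonneg (by positivity)]
    have e1 := norm_sub_le_norm_add ((3 * R / 2 : ℝ) : ℂ) w
    have e2 := norm_add_le ((3 * R / 2 : ℝ) : ℂ) w
    rw [e0] at e1 e2
    constructor <;> linarith
  have hI : ∀ x : ℂ, ‖I * x‖ = ‖x‖ := fun x => by rw [norm_mul, norm_I, one_mul]
  have hsum : ∀ u v : ℂ, ‖u‖ < R / 8 → ‖v‖ < R / 8 → ‖u + I * v‖ < R / 4 ∧ ‖u - I * v‖ < R / 4 := by
    intro u v hu hv
    have e1 := norm_add_le u (I * v)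
    have e2 := norm_sub_le u (I * v)
    rw [hI] at e1 e2
    constructor <;> linarith
  -- in the coordinates `l = c + u + i v`, `m = c + u - i v` the antidiagonal is `u, v` real
  have key : ∀ u v : ℂ, ‖u‖ < R / 8 → ‖v‖ < R / 8 →
      D ((3 * R / 2 : ℝ) + (u + I * v)) ((3 * R / 2 : ℝ) + (u - I * v)) = 0 := by
    have hreg : ∀ u v : ℂ, ‖u‖ < R / 8 → ‖v‖ < R / 8 →
        R < ‖((3 * R / 2 : ℝ) : ℂ) + (u + I * v)‖ ∧
        ‖((3 * R / 2 : ℝ) : ℂ) + (u + I * v)‖ < 2 * R ∧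
        R < ‖((3 * R / 2 : ℝ) : ℂ) + (u - I * v)‖ := fun u v hu hv =>
      ⟨(hnear _ (hsum u v hu hv).1).1, (hnear _ (hsum u v hu hv).1).2,
        (hnear _ (hsum u v hu hv).2).1⟩
    have hR8 : 0 < R / 8 := by positivity
    have step1 : ∀ v : ℝ, |v| < R / 8 → ∀ u : ℂ, ‖u‖ < R / 8 →
        D ((3 * R / 2 : ℝ) + (u + I * v)) ((3 * R / 2 : ℝ) + (u - I * v)) = 0 := by
      intro v hv
      have hv' : ‖(v : ℂ)‖ < R / 8 := by rwa [Complex.norm_real]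
      refine eq_zero_on_ball_of_real hR8 (hD (fun u => (3 * R / 2 : ℝ) + (u + I * v))
        (fun u => (3 * R / 2 : ℝ) + (u - I * v)) (by fun_prop) (by fun_prop) _ isOpen_ball
        fun z hz => hreg z v (mem_ball_zero_iff.1 hz) hv') fun x hx => ?_
      have hx' : ‖(x : ℂ)‖ < R / 8 := by rwa [Complex.norm_real]
      have := h0 _ (hreg x v hx' hv').1 (hreg x v hx' hv').2.1
      convert this using 2
      simp only [map_add, map_mul, Complex.conj_ofReal, Complex.conj_I]
      ring
    intro u v hu hv
    exact eq_zero_on_ball_of_real hR8 (hD (fun v => (3 * R / 2 : ℝ) + (u + I * v))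
      (fun v => (3 * R / 2 : ℝ) + (u - I * v)) (by fun_prop) (by fun_prop) _ isOpen_ball
      fun z hz => hreg u z hu (mem_ball_zero_iff.1 hz)) (fun x hx => step1 x hx u hu) v hv
  -- back to `(l, m)`; this is the required vanishing for `m` near `3 R / 2`
  have key2 : ∀ m : ℂ, ‖m - (3 * R / 2 : ℝ)‖ < R / 8 → D l m = 0 := by
    intro m hm
    set a := l - (3 * R / 2 : ℝ) with ha
    set b := m - (3 * R / 2 : ℝ) with hb
    have e1 := norm_add_le a b
    have e2 := norm_sub_le b a
    have hh : ∀ x : ℂ, ‖x / 2‖ = ‖x‖ / 2 := fun x => by simp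
    have := key ((a + b) / 2) (I * ((b - a) / 2)) (by rw [hh]; linarith) (by rw [hI, hh]; linarith)
    convert this using 2
    · rw [← mul_assoc, I_mul_I, ha, hb]; ring
    · rw [← mul_assoc, I_mul_I, ha, hb]; ring
  have hl2 : R < ‖l‖ ∧ ‖l‖ < 2 * R := by
    have := hnear (l - (3 * R / 2 : ℝ)) (by linarith)
    simpa using this
  -- The identity theorem spreads it to all `|m| > R`.  The substitution `m = exp τ`, `τ` in a
  -- half-plane, replaces connectedness of the exterior of a disc by convexity.
  have hm0 : m ≠ 0 := by rintro rfl; simp at hm; linarith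
  have hU : IsOpen {τ : ℂ | Real.log R < τ.re} := isOpen_lt continuous_const Complex.continuous_re
  have hexp : ∀ τ : ℂ, Real.log R < τ.re → R < ‖Complex.exp τ‖ := by
    intro τ hτ
    rw [Complex.norm_exp, ← Real.log_lt_iff_lt_exp hR]; exact hτ
  have han := (hD (fun _ => l) Complex.exp (differentiable_const _) Complex.differentiable_exp _ hU
    fun z hz => ⟨hl2.1, hl2.2, hexp z hz⟩).analyticOnNhd hU
  have hconn : IsPreconnected {τ : ℂ | Real.log R < τ.re} :=
    (convex_halfSpace_re_gt _).isPreconnected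
  have h3 : (0 : ℝ) < 3 * R / 2 := by positivity
  have hτ0 : (Real.log (3 * R / 2) : ℂ) ∈ {τ : ℂ | Real.log R < τ.re} := by
    simpa using Real.log_lt_log hR (by linarith : R < 3 * R / 2)
  have hexp0 : Complex.exp (Real.log (3 * R / 2) : ℂ) = (3 * R / 2 : ℝ) := by
    rw [← Complex.ofReal_exp, Real.exp_log h3]
  have hz := han.eqOn_zero_of_preconnected_of_eventuallyEq_zero hconn hτ0 (by
    have hc : ContinuousAt Complex.exp (Real.log (3 * R / 2) : ℂ) :=
      Complex.continuous_exp.continuousAt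
    have hb : ball (((3 * R / 2 : ℝ) : ℂ)) (R / 8) ∈ nhds (Complex.exp (Real.log (3 * R / 2) : ℂ)) := by
      rw [hexp0]; exact ball_mem_nhds _ (by positivity)
    filter_upwards [hc hb] with τ hτ
    exact key2 _ (by simpa [dist_eq_norm] using hτ))
  have := hz (x := Complex.log m) (by
    simpa [Complex.log_re] using Real.log_lt_log hR hm)
  simpa [Complex.exp_log hm0] using this

/-! ### Holomorphic dependence on the line near the boundary point -/

/-- On the circle `|s ζ - 1| = 1` the conjugate is a rational function of `ζ` without pole at `0`. -/
theorem conj_eq_of_mem_circle {s : ℝ} (hs : 0 < s) {ζ : ℂ} (h : ‖(s : ℂ) * ζ - 1‖ = 1) :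
    (starRingEnd ℂ) ζ = ζ / ((s : ℂ) * ζ - 1) := by
  have h0 : (s : ℂ) * ζ - 1 ≠ 0 := by
    intro h0; rw [h0, norm_zero] at h; norm_num at h
  have hsC : (s : ℂ) ≠ 0 := by exact_mod_cast hs.ne'
  have e := Complex.mul_conj' ((s : ℂ) * ζ - 1)
  rw [h] at e
  simp only [map_sub, map_mul, Complex.conj_ofReal, map_one, Complex.ofReal_one, one_pow] at e
  rw [eq_div_iff h0]
  apply mul_left_cancel₀ hsC
  linear_combination e

/-- The Taylor coefficients of `KK l m` at `ζ = 0` do not depend on `m`, provided that for `m = conj l`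
the values of `KK` on the circles extend holomorphically into the discs. -/
theorem KK_coeff_eq {Φ : ℂ × ℂ × ℂ × ℂ → ℂ} {N : ℂ → ℂ → ℂ} {ε C : ℝ} (hε : 0 < ε)
    (hΦ : AnalyticOnNhd ℂ Φ (ball 0 ε)) (hC : ∀ q ∈ ball 0 ε, ‖Φ q‖ ≤ C)
    (hN : Differentiable ℂ fun x : ℂ × ℂ => N x.1 x.2) {κ R₀ : ℝ} (hκ : 0 < κ)
    (hgrow : ∀ l m : ℂ, R₀ ≤ ‖l‖ → R₀ ≤ ‖m‖ → κ * (‖l‖ * ‖m‖) ≤ ‖N l m‖)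
    {s : ℂ → ℝ} (hs0 : ∀ t, 0 < s t) (hs : ∀ t, N t ((starRingEnd ℂ) t) = s t) {g : ℂ → ℂ → ℂ}
    (hgc : ∀ t, ContinuousOn (g t) {ζ : ℂ | ‖(s t : ℂ) * ζ - 1‖ ≤ 1})
    (hgd : ∀ t, DifferentiableOn ℂ (g t) {ζ : ℂ | ‖(s t : ℂ) * ζ - 1‖ < 1})
    (hgk : ∀ t ζ, ‖(s t : ℂ) * ζ - 1‖ = 1 → ‖ζ‖ < ε → ‖ζ * t‖ < ε →
      g t ζ = KK Φ N t ((starRingEnd ℂ) t) ζ) (k : ℕ) (l m : ℂ) :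
    iteratedDeriv k (KK Φ N l m) 0 = iteratedDeriv k (KK Φ N l 0) 0 := by
  obtain ⟨R, hR, r, hr, hlarge⟩ := exists_good_of_large hε hκ hgrow
  have hcirc : ∀ l m : ℂ, R < ‖l‖ → ‖l‖ < 2 * R → R < ‖m‖ → ∀ ζ : ℂ, ‖ζ‖ = r →
      Good N ε l m ζ := by
    intro l m h1 h2 h3 ζ hζ
    obtain ⟨hN3, hG⟩ := hlarge l m h1.le h2.le h3.le
    refine hG ζ hζ.le ?_
    have e1 : ‖N l m * ζ‖ - ‖(1 : ℂ)‖ ≤ ‖N l m * ζ - 1‖ := norm_sub_norm_le _ _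
    rw [norm_mul, norm_one, hζ] at e1
    linarith
  set q : ℂ := 2 * Real.pi * I / k.factorial with hq
  have hq0 : q ≠ 0 := by
    rw [hq]
    have := Complex.two_pi_I_ne_zero
    have h2 : (k.factorial : ℂ) ≠ 0 := by exact_mod_cast k.factorial_ne_zero
    exact div_ne_zero this h2
  set J : ℂ → ℂ → ℂ := fun l m => ∮ ζ in C(0, r), (1 / (ζ - 0) ^ (k + 1)) • KK Φ N l m ζ with hJ
  set Q : ℂ → ℂ → ℂ := fun l m => q • iteratedDeriv k (KK Φ N l m) 0 with hQ
  have hQd : ∀ lf mf : ℂ → ℂ, Differentiable ℂ lf → Differentiable ℂ mf →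
      Differentiable ℂ fun z => Q (lf z) (mf z) := fun lf mf hl hm =>
    KK_coeff_differentiable hε hΦ hN hl hm k
  -- `J`, the integral over the fixed circle, equals the Taylor coefficient `Q` on `m = conj l` by
  -- the extension hypothesis, hence for all large `m` by polarization
  have hJQ : ∀ l m : ℂ, ‖l - (3 * R / 2 : ℝ)‖ < R / 8 → R < ‖m‖ → J l m - Q l m = 0 := by
    intro l m hl hm
    refine eq_zero_of_antidiagonal (D := fun l m => J l m - Q l m) hR ?_ ?_ hl hm
    · intro lf mf hlf hmf U hU hmem
      refine DifferentiableOn.sub ?_ (hQd lf mf hlf hmf).differentiableOn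
      exact KK_integral_differentiableOn hΦ hN hlf hmf hU hr
        (fun z hz ζ hζ => hcirc _ _ (hmem z hz).1 (hmem z hz).2.1 (hmem z hz).2.2 ζ hζ) k
    · intro t ht1 ht2
      have hct : ‖(starRingEnd ℂ) t‖ = ‖t‖ := Complex.norm_conj t
      obtain ⟨hN3, hG⟩ := hlarge t ((starRingEnd ℂ) t) ht1.le ht2.le (by rw [hct]; exact ht1.le)
      rw [hs t] at hN3 hG
      rw [Complex.norm_real, Real.norm_of_nonneg (hs0 t).le] at hN3
      have := circleIntegral_eq_iteratedDeriv_of_extends (hs0 t) hr hN3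
        (k := KK Φ N t ((starRingEnd ℂ) t)) (g := g t) (fun ζ h1 h2 =>
          KK_differentiableAt hΦ hN (lf := fun _ => t) (mf := fun _ => (starRingEnd ℂ) t)
          (zf := fun ζ => ζ) (differentiableAt_const _) (differentiableAt_const _)
          differentiableAt_id (hG ζ h1 h2)) (hgc t) (hgd t) (by
            intro ζ hζ
            have hζr : ‖ζ‖ ≤ r := by
              have h1 : ‖(s t : ℂ) * ζ‖ - ‖(1 : ℂ)‖ ≤ ‖(s t : ℂ) * ζ - 1‖ := norm_sub_norm_le _ _
              rw [norm_mul, norm_one, hζ, Complex.norm_real, Real.norm_of_nonneg (hs0 t).le] at h1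
              by_contra! hlt
              nlinarith [hs0 t]
            have := hG ζ hζr (by rw [hζ]; norm_num)
            exact hgk t ζ hζ this.h1 this.h2) k
      exact sub_eq_zero.2 this
  -- Liouville in `m`: `Q l` is entire, and for `|m| > R` it equals `J l`, which is bounded
  have hconst : ∀ l m : ℂ, ‖l - (3 * R / 2 : ℝ)‖ < R / 8 → Q l m = Q l 0 := by
    intro l m hl
    have hl2 : R < ‖l‖ ∧ ‖l‖ < 2 * R := by
      have e0 : ‖((3 * R / 2 : ℝ) : ℂ)‖ = 3 * R / 2 := by
        rw [Complex.norm_real, Real.norm_of_nonneg (by positivity)]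
      have e1 := norm_sub_norm_le ((3 * R / 2 : ℝ) : ℂ) l
      have e2 := norm_sub_norm_le l ((3 * R / 2 : ℝ) : ℂ)
      rw [norm_sub_rev] at e1
      rw [e0] at e1 e2
      constructor <;> linarith
    have hd : Differentiable ℂ (fun m => Q l m) :=
      hQd (fun _ => l) (fun m => m) (differentiable_const _) differentiable_id
    obtain ⟨B, hB⟩ := (isCompact_closedBall (0 : ℂ) R).exists_bound_of_continuousOn
      hd.continuous.continuousOn
    refine hd.apply_eq_apply_of_bounded ?_ m 0
    rw [isBounded_iff_forall_norm_le]
    refine ⟨max B (2 * Real.pi * r * (1 / r ^ (k + 1) * C)), ?_⟩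
    rintro _ ⟨m, rfl⟩
    rcases le_or_gt ‖m‖ R with hm | hm
    · exact (hB m (mem_closedBall_zero_iff.2 hm)).trans (le_max_left _ _)
    · refine le_trans ?_ (le_max_right _ _)
      simp only
      rw [← sub_eq_zero.1 (hJQ l m hl hm)]
      refine circleIntegral.norm_integral_le_of_norm_le_const hr.le fun ζ hζ => ?_
      have hζr : ‖ζ‖ = r := by simpa using hζ
      rw [norm_smul, norm_div, norm_pow, sub_zero, hζr, norm_one]
      gcongr
      exact hC _ (hcirc l m hl2.1 hl2.2 hm ζ hζr).mem_ball
  -- identity theorem in `l`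
  have hall : Q l m = Q l 0 := by
    have hd : Differentiable ℂ (fun l => Q l m - Q l 0) :=
      (hQd (fun l => l) (fun _ => m) differentiable_id (differentiable_const _)).sub
        (hQd (fun l => l) (fun _ => 0) differentiable_id (differentiable_const _))
    have hz := (hd.differentiableOn.analyticOnNhd isOpen_univ).eqOn_zero_of_preconnected_of_eventuallyEq_zero
      isPreconnected_univ (mem_univ ((3 * R / 2 : ℝ) : ℂ)) (by
        filter_upwards [ball_mem_nhds ((3 * R / 2 : ℝ) : ℂ) (show 0 < R / 8 by positivity)] with l hl
        exact sub_eq_zero.2 (hconst l m (by simpa [dist_eq_norm] using hl)))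
    exact sub_eq_zero.1 (hz (mem_univ l))
  exact smul_right_injective ℂ hq0 hall

/-- Near the boundary point `ζ = 0` the extensions `g t` are the values of one function `K t ζ`
holomorphic in `t`, namely `KK Φ N t 0 ζ`; the neighbourhood `|ζ| < δ` is uniform for `|t| ≤ M`. -/
theorem exists_holomorphic_in_parameter {Φ : ℂ × ℂ × ℂ × ℂ → ℂ} {N : ℂ → ℂ → ℂ} {ε C : ℝ}
    (hε : 0 < ε)
    (hΦ : AnalyticOnNhd ℂ Φ (ball 0 ε)) (hC : ∀ q ∈ ball 0 ε, ‖Φ q‖ ≤ C)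
    (hN : Differentiable ℂ fun x : ℂ × ℂ => N x.1 x.2) {κ R₀ : ℝ} (hκ : 0 < κ)
    (hgrow : ∀ l m : ℂ, R₀ ≤ ‖l‖ → R₀ ≤ ‖m‖ → κ * (‖l‖ * ‖m‖) ≤ ‖N l m‖)
    {s : ℂ → ℝ} (hs1 : ∀ t, 1 ≤ s t) (hs : ∀ t, N t ((starRingEnd ℂ) t) = s t) {g : ℂ → ℂ → ℂ}
    (hgc : ∀ t, ContinuousOn (g t) {ζ : ℂ | ‖(s t : ℂ) * ζ - 1‖ ≤ 1})
    (hgd : ∀ t, DifferentiableOn ℂ (g t) {ζ : ℂ | ‖(s t : ℂ) * ζ - 1‖ < 1})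
    (hgk : ∀ t ζ, ‖(s t : ℂ) * ζ - 1‖ = 1 → ‖ζ‖ < ε → ‖ζ * t‖ < ε →
      g t ζ = KK Φ N t ((starRingEnd ℂ) t) ζ) (M : ℝ) :
    ∃ δ > 0, ∃ K : ℂ → ℂ → ℂ, (∀ ζ, ‖ζ‖ < δ → DifferentiableOn ℂ (fun t => K t ζ) (ball 0 M)) ∧
      ∀ t, ‖t‖ ≤ M → ∀ ζ, ‖(s t : ℂ) * ζ - 1‖ < 1 → ‖ζ‖ < δ → g t ζ = K t ζ := by
  have hs0 : ∀ t, 0 < s t := fun t => one_pos.trans_le (hs1 t)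
  obtain ⟨δ, hδ, hgood⟩ := exists_good_of_bounded hε hN M
  have hKd : ∀ l m : ℂ, ‖l‖ ≤ M → ‖m‖ ≤ M → ∀ ζ : ℂ, ‖ζ‖ ≤ δ →
      DifferentiableAt ℂ (KK Φ N l m) ζ := fun l m hl hm ζ hζ =>
    KK_differentiableAt hΦ hN (lf := fun _ => l) (mf := fun _ => m)
          (zf := fun ζ => ζ) (differentiableAt_const _) (differentiableAt_const _)
          differentiableAt_id (hgood l m ζ hl hm hζ)
  refine ⟨min δ (δ ^ 2 / 2), by positivity, fun t => KK Φ N t 0, ?_, ?_⟩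
  · intro ζ hζ t ht
    have ht : ‖t‖ < M := by simpa using ht
    refine DifferentiableAt.differentiableWithinAt ?_
    exact KK_differentiableAt hΦ hN (lf := fun t => t) (mf := fun _ => 0)
          (zf := fun _ => ζ) differentiableAt_id (differentiableAt_const _)
          (differentiableAt_const _) (hgood t 0 ζ ht.le
            (by rw [norm_zero]; exact (norm_nonneg t).trans ht.le) (hζ.le.trans (min_le_left _ _)))
  · intro t ht ζ h1 h2
    have hct : ‖(starRingEnd ℂ) t‖ ≤ M := by rwa [Complex.norm_conj]
    have h0M : ‖(0 : ℂ)‖ ≤ M := by rw [norm_zero]; exact (norm_nonneg t).trans ht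
    have hζδ : ‖ζ‖ < δ := h2.trans_le (min_le_left _ _)
    -- both sides have the same Taylor series at `0`
    have hKK : KK Φ N t ((starRingEnd ℂ) t) ζ = KK Φ N t 0 ζ := by
      have hζ : ζ ∈ ball (0 : ℂ) δ := mem_ball_zero_iff.2 hζδ
      have e1 := Complex.hasSum_taylorSeries_on_ball (f := KK Φ N t ((starRingEnd ℂ) t)) (r := δ)
        (c := 0) (fun z hz => (hKd _ _ ht hct z (mem_ball_zero_iff.1 hz).le).differentiableWithinAt) hζ
      have e2 := Complex.hasSum_taylorSeries_on_ball (f := KK Φ N t 0) (r := δ)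
        (c := 0) (fun z hz => (hKd _ _ ht h0M z (mem_ball_zero_iff.1 hz).le).differentiableWithinAt) hζ
      simp only [KK_coeff_eq hε hΦ hC hN hκ hgrow hs0 hs hgc hgd hgk _ t ((starRingEnd ℂ) t)] at e1
      exact e1.unique e2
    show g t ζ = KK Φ N t 0 ζ
    rw [← hKK]
    -- `g t` and `KK Φ N t (conj t)` agree on the circle near `0`, hence in the lens
    refine sub_eq_zero.1 (eq_zero_of_eq_zero_on_arc (hs0 t) (δ := δ)
      (h := fun ζ => g t ζ - KK Φ N t ((starRingEnd ℂ) t) ζ) ?_ ?_ ?_ h1 hζδ ?_)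
    · exact ((hgc t).mono inter_subset_left).sub fun z hz =>
        (hKd _ _ ht hct z (mem_closedBall_zero_iff.1 hz.2)).continuousAt.continuousWithinAt
    · exact ((hgd t).mono inter_subset_left).sub fun z hz =>
        (hKd _ _ ht hct z (mem_ball_zero_iff.1 hz.2).le).differentiableWithinAt
    · intro z hz hzδ
      have := hgood t _ z ht hct hzδ
      exact sub_eq_zero.2 (hgk t z hz this.h1 this.h2)
    · refine (h2.trans_le (min_le_right _ _)).trans_le ?_
      nlinarith [hs1 t, sq_nonneg δ]

/-! ### Propagation along the discs -/

/-- In this form it is clear that the discs `|s ζ - 1| < 1` decrease with `s`. -/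
theorem mem_disc_iff {s : ℝ} (hs : 0 < s) (ζ : ℂ) :
    ‖(s : ℂ) * ζ - 1‖ < 1 ↔ s * ‖ζ‖ ^ 2 < 2 * ζ.re := by
  rw [← sq_lt_one_iff₀ (norm_nonneg _), Complex.sq_norm, Complex.sq_norm, Complex.normSq_apply,
    Complex.normSq_apply]
  simp only [Complex.sub_re, Complex.mul_re, Complex.ofReal_re, Complex.ofReal_im, Complex.one_re,
    Complex.sub_im, Complex.mul_im, Complex.one_im, zero_mul, sub_zero, add_zero]
  constructor
  · intro h
    by_contra! h2
    nlinarith [mul_le_mul_of_nonneg_left h2 hs.le]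
  · intro h
    nlinarith [mul_lt_mul_of_pos_left h hs]

/-- Propagation along the discs: if `g t ζ` is holomorphic in `ζ`, jointly continuous, and
holomorphic in `t` for `ζ` near `0`, then it is holomorphic in `t` at every interior point.  Cauchy's
formula in `t` is an identity between functions holomorphic in `ζ`, so it extends from the part near
`0` to the whole disc. -/
theorem differentiableAt_in_parameter {s : ℂ → ℝ} (hsc : Continuous s) (hs0 : ∀ t, 0 < s t)
    {g : ℂ → ℂ → ℂ}
    (hgd : ∀ t, DifferentiableOn ℂ (g t) {ζ : ℂ | ‖(s t : ℂ) * ζ - 1‖ < 1})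
    (hjc : ContinuousOn (Function.uncurry g) {x : ℂ × ℂ | ‖(s x.1 : ℂ) * x.2 - 1‖ < 1})
    (hK : ∀ M : ℝ, ∃ δ > 0, ∃ K : ℂ → ℂ → ℂ,
      (∀ ζ, ‖ζ‖ < δ → DifferentiableOn ℂ (fun t => K t ζ) (ball 0 M)) ∧
      ∀ t, ‖t‖ ≤ M → ∀ ζ, ‖(s t : ℂ) * ζ - 1‖ < 1 → ‖ζ‖ < δ → g t ζ = K t ζ)
    {ζ₀ : ℂ} (hζ₀ : ‖(s 0 : ℂ) * ζ₀ - 1‖ < 1) : DifferentiableAt ℂ (fun t => g t ζ₀) 0 := by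
  have hopen : IsOpen {t : ℂ | ‖(s t : ℂ) * ζ₀ - 1‖ < 1} := by
    refine isOpen_lt ?_ continuous_const
    have := Complex.continuous_ofReal.comp hsc
    fun_prop
  obtain ⟨ρ, hρ, hball⟩ := Metric.isOpen_iff.1 hopen 0 hζ₀
  set ρ' := ρ / 2 with hρ'
  have hρ'0 : 0 < ρ' := by positivity
  have hsub : closedBall (0 : ℂ) ρ' ⊆ {t : ℂ | ‖(s t : ℂ) * ζ₀ - 1‖ < 1} := fun t ht =>
    hball (by rw [mem_ball_zero_iff]; have := mem_closedBall_zero_iff.1 ht; linarith)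
  -- the discs shrink as `s` grows, so the disc `Ω` for the maximal value `S` of `s` is contained in
  -- all discs with `|t| ≤ ρ'`, and it still contains `ζ₀`
  obtain ⟨t₁, ht₁, hmax⟩ := (isCompact_closedBall (0 : ℂ) ρ').exists_isMaxOn
    ⟨0, mem_closedBall_self hρ'0.le⟩ hsc.continuousOn
  set S := s t₁ with hS
  have hS0 : 0 < S := hs0 t₁
  set Ω : Set ℂ := {ζ : ℂ | ‖(S : ℂ) * ζ - 1‖ < 1} with hΩ
  have hΩo : IsOpen Ω := isOpen_lt (by fun_prop) continuous_const
  have hΩsub : ∀ t ∈ closedBall (0 : ℂ) ρ', ∀ ζ ∈ Ω, ‖(s t : ℂ) * ζ - 1‖ < 1 := by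
    intro t ht ζ hζ
    rw [mem_disc_iff (hs0 t)]
    have h1 := (mem_disc_iff hS0 ζ).1 hζ
    have h2 : s t ≤ S := hmax ht
    nlinarith [sq_nonneg ‖ζ‖]
  have hΩconn : IsPreconnected Ω := by
    have : Ω = ((fun ζ : ℂ => (S : ℂ) * ζ - 1) ⁻¹' ball 0 1) := by ext; simp [hΩ]
    have e : Ω = (fun y : ℂ => (S : ℂ)⁻¹ * (y + 1)) '' ball 0 1 := by
      have hSC : (S : ℂ) ≠ 0 := by exact_mod_cast hS0.ne'
      ext ζ
      constructor
      · intro h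
        exact ⟨(S : ℂ) * ζ - 1, by rw [this] at h; exact h, by field_simp; ring⟩
      · rintro ⟨y, hy, rfl⟩
        rw [this]
        show (S : ℂ) * ((S : ℂ)⁻¹ * (y + 1)) - 1 ∈ ball (0 : ℂ) 1
        rw [← mul_assoc, mul_inv_cancel₀ hSC, one_mul, add_sub_cancel_right]; exact hy
    rw [e]
    exact (convex_ball (0 : ℂ) 1).isPreconnected.image _ (by fun_prop)
  have hζ₀Ω : ζ₀ ∈ Ω := hsub ht₁
  obtain ⟨δ, hδ, K, hKd, hKg⟩ := hK (2 * ρ')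
  -- Cauchy's formula in the parameter holds for every `ζ ∈ Ω`
  have hcauchy : ∀ t ∈ ball (0 : ℂ) ρ', ∀ ζ ∈ Ω,
      ∮ w in C(0, ρ'), (w - t)⁻¹ • g w ζ = (2 * Real.pi * I : ℂ) • g t ζ := by
    intro t ht
    have htc := ball_subset_closedBall ht
    have hpair : ∀ w ∈ closedBall (0 : ℂ) ρ', ∀ ζ ∈ Ω, ContinuousAt (Function.uncurry g) (w, ζ) := by
      intro w hw ζ hζ
      refine hjc.continuousAt (IsOpen.mem_nhds ?_ (hΩsub w hw ζ hζ))
      refine isOpen_lt ?_ continuous_const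
      have := Complex.continuous_ofReal.comp (hsc.comp (continuous_fst (X := ℂ) (Y := ℂ)))
      exact ((this.mul continuous_snd).sub continuous_const).norm
    have hd1 : DifferentiableOn ℂ (fun ζ => ∮ w in C(0, ρ'), (w - t)⁻¹ • g w ζ) Ω := by
      refine circ_param_differentiableOn hΩo hρ'0.le (G := fun ζ w => (w - t)⁻¹ • g w ζ) ?_ ?_
      · rintro ⟨ζ, w⟩ ⟨hζ, hw⟩
        refine ContinuousAt.continuousWithinAt ?_
        have h1 : ContinuousAt (fun x : ℂ × ℂ => g x.2 x.1) (ζ, w) :=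
          ContinuousAt.comp (g := Function.uncurry g) (f := fun x : ℂ × ℂ => (x.2, x.1))
            (hpair w (sphere_subset_closedBall hw) ζ hζ) (by fun_prop)
        refine ContinuousAt.smul (f := fun x : ℂ × ℂ => (x.2 - t)⁻¹) ?_ h1
        refine ContinuousAt.inv₀ (by fun_prop) ?_
        rw [sub_ne_zero]
        rintro rfl
        exact (ne_of_mem_of_not_mem ht (by
          intro h; rw [mem_ball, mem_sphere.1 hw] at h; exact lt_irrefl _ h)) rfl
      · intro w hw ζ hζ
        have : DifferentiableAt ℂ (g w) ζ := (hgd w).differentiableAt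
          ((isOpen_lt (by fun_prop) continuous_const).mem_nhds
            (hΩsub w (sphere_subset_closedBall hw) ζ hζ))
        exact (this.const_smul ((w - t)⁻¹)).differentiableWithinAt
    have hd2 : DifferentiableOn ℂ (fun ζ => (2 * Real.pi * I : ℂ) • g t ζ) Ω :=
      ((hgd t).mono fun ζ hζ => hΩsub t htc ζ hζ).const_smul (2 * Real.pi * I : ℂ)
    -- it holds near the boundary point, hence everywhere
    have hsmall : ∀ ζ ∈ Ω, ‖ζ‖ < δ →
        ∮ w in C(0, ρ'), (w - t)⁻¹ • g w ζ = (2 * Real.pi * I : ℂ) • g t ζ := by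
      intro ζ hζ hζδ
      have hKdζ := hKd ζ hζδ
      have hKdc : DiffContOnCl ℂ (fun t => K t ζ) (ball 0 ρ') := by
        refine DifferentiableOn.diffContOnCl (hKdζ.mono ?_)
        rw [closure_ball _ hρ'0.ne']
        intro x hx
        rw [mem_ball_zero_iff]; have := mem_closedBall_zero_iff.1 hx; linarith
      have := hKdc.circleIntegral_sub_inv_smul ht
      have hle : ∀ w ∈ closedBall (0 : ℂ) ρ', ‖w‖ ≤ 2 * ρ' := fun w hw => by
        have := mem_closedBall_zero_iff.1 hw; linarith
      rw [hKg t (hle t htc) ζ (hΩsub t htc ζ hζ) hζδ, ← this]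
      refine circleIntegral.integral_congr hρ'0.le fun w hw => ?_
      have hwc := sphere_subset_closedBall hw
      simp only [hKg w (hle w hwc) ζ (hΩsub w hwc ζ hζ) hζδ]
    obtain ⟨x, hx0, hxS, hxδ⟩ : ∃ x : ℝ, 0 < x ∧ x < 2 / S ∧ x < δ := by
      obtain ⟨x, hx0, hx⟩ := exists_between (lt_min (show 0 < 2 / S by positivity) hδ)
      exact ⟨x, hx0, lt_min_iff.1 hx⟩
    have hxΩ : (x : ℂ) ∈ Ω := by
      refine (mem_disc_iff hS0 _).2 ?_
      rw [lt_div_iff₀ hS0] at hxS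
      rw [Complex.norm_real, Real.norm_of_nonneg hx0.le, Complex.ofReal_re]
      nlinarith
    have := (hd1.analyticOnNhd hΩo).eqOn_of_preconnected_of_eventuallyEq
      (hd2.analyticOnNhd hΩo) hΩconn hxΩ (by
        filter_upwards [hΩo.mem_nhds hxΩ, (isOpen_ball (x := (0 : ℂ)) (ε := δ)).mem_nhds
          (show (x : ℂ) ∈ ball (0 : ℂ) δ by simpa [abs_of_pos hx0] using hxδ)] with ζ h1 h2
        exact hsmall ζ h1 (mem_ball_zero_iff.1 h2))
    exact this
  have hpi : (2 * Real.pi * I : ℂ) ≠ 0 := Complex.two_pi_I_ne_zero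
  have hd : DifferentiableOn ℂ (fun t => ∮ w in C(0, ρ'), (w - t)⁻¹ • g w ζ₀) (ball 0 ρ') := by
    refine circ_param_differentiableOn isOpen_ball hρ'0.le (G := fun t w => (w - t)⁻¹ • g w ζ₀) ?_ ?_
    · have hne : ∀ x ∈ ball (0 : ℂ) ρ' ×ˢ sphere (0 : ℂ) ρ', x.2 - x.1 ≠ 0 := by
        rintro ⟨t, w⟩ ⟨ht, hw⟩ h
        have : w = t := sub_eq_zero.1 h
        rw [this] at hw
        simp only [mem_ball, mem_sphere] at ht hw
        linarith
      refine ContinuousOn.smul (f := fun x : ℂ × ℂ => (x.2 - x.1)⁻¹) (g := fun x => g x.2 ζ₀)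
        (ContinuousOn.inv₀ (by fun_prop) hne) ?_
      refine ContinuousOn.comp (g := Function.uncurry g) (f := fun x : ℂ × ℂ => (x.2, ζ₀)) hjc
        (by fun_prop) ?_
      rintro ⟨t, w⟩ ⟨ht, hw⟩
      exact hsub (sphere_subset_closedBall hw)
    · intro w hw t ht
      refine DifferentiableAt.differentiableWithinAt ?_
      have hne : w - t ≠ 0 := by
        intro h
        have : w = t := sub_eq_zero.1 h
        rw [this] at hw
        simp only [mem_ball, mem_sphere] at ht hw
        linarith
      exact (DifferentiableAt.inv (by fun_prop) hne).smul_const _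
  have hd' := (hd.differentiableAt (isOpen_ball.mem_nhds (mem_ball_self hρ'0))).const_smul
    ((2 * Real.pi * I : ℂ)⁻¹)
  refine hd'.congr_of_eventuallyEq ?_
  filter_upwards [ball_mem_nhds (0 : ℂ) hρ'0] with t ht
  simp only [Pi.smul_apply]
  rw [hcauchy t ht ζ₀ hζ₀Ω, smul_smul, inv_mul_cancel₀ hpi, one_smul]

/-! ### Lines through a boundary point -/

section Geometry

variable {E : Type*} [NormedAddCommGroup E] [InnerProductSpace ℂ E]

theorem norm_add_smul_sq {p v : E} (hp : ‖p‖ = 1) (hv : inner ℂ p v = -1) (ζ : ℂ) :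
    ‖p + ζ • v‖ ^ 2 = 1 - 2 * ζ.re + ‖ζ‖ ^ 2 * ‖v‖ ^ 2 := by
  rw [norm_add_sq (𝕜 := ℂ), hp, inner_smul_right, hv, norm_smul, mul_pow]
  simp
  ring

/-- In the normalised parametrisation `p + ζ • v`, the ball corresponds to `|s ζ - 1| < 1` with
`s = ‖v‖²`, and the sphere to the boundary circle. -/
theorem norm_sub_sq_of_circle {p v : E} (hp : ‖p‖ = 1) (hv : inner ℂ p v = -1) (ζ : ℂ) :
    ‖((‖v‖ ^ 2 : ℝ) : ℂ) * ζ - 1‖ ^ 2 - 1 = ‖v‖ ^ 2 * (‖p + ζ • v‖ ^ 2 - 1) := by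
  rw [norm_add_smul_sq hp hv, Complex.sq_norm, Complex.sq_norm, Complex.normSq_apply,
    Complex.normSq_apply]
  simp only [Complex.sub_re, Complex.mul_re, Complex.ofReal_re, Complex.ofReal_im, Complex.one_re,
    Complex.sub_im, Complex.mul_im, Complex.one_im, zero_mul, sub_zero, add_zero]
  ring

theorem one_le_norm_sq {p v : E} (hp : ‖p‖ = 1) (hv : inner ℂ p v = -1) : 1 ≤ ‖v‖ ^ 2 := by
  have := norm_inner_le_norm (𝕜 := ℂ) p v
  rw [hv, hp, one_mul, norm_neg, norm_one] at this
  nlinarith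

theorem mem_ball_iff_disc {p v : E} (hp : ‖p‖ = 1) (hv : inner ℂ p v = -1) (ζ : ℂ) :
    ‖p + ζ • v‖ < 1 ↔ ‖((‖v‖ ^ 2 : ℝ) : ℂ) * ζ - 1‖ < 1 := by
  have h := norm_sub_sq_of_circle hp hv ζ
  have h1 := one_le_norm_sq hp hv
  rw [← sq_lt_one_iff₀ (norm_nonneg _), ← sq_lt_one_iff₀ (norm_nonneg _)]
  constructor <;> intro <;> nlinarith

theorem mem_sphere_iff_circle {p v : E} (hp : ‖p‖ = 1) (hv : inner ℂ p v = -1) (ζ : ℂ) :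
    ‖p + ζ • v‖ = 1 ↔ ‖((‖v‖ ^ 2 : ℝ) : ℂ) * ζ - 1‖ = 1 := by
  have h := norm_sub_sq_of_circle hp hv ζ
  have h1 := one_le_norm_sq hp hv
  rw [← pow_eq_one_iff_of_nonneg (norm_nonneg _) two_ne_zero,
    ← pow_eq_one_iff_of_nonneg (norm_nonneg (_ - _)) two_ne_zero]
  constructor
  · intro h2; rw [h2] at h; linarith
  · intro h2; rw [h2] at h; nlinarith

theorem mem_closedBall_iff_disc {p v : E} (hp : ‖p‖ = 1) (hv : inner ℂ p v = -1) (ζ : ℂ) :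
    ‖p + ζ • v‖ ≤ 1 ↔ ‖((‖v‖ ^ 2 : ℝ) : ℂ) * ζ - 1‖ ≤ 1 := by
  rw [le_iff_lt_or_eq, le_iff_lt_or_eq, mem_ball_iff_disc hp hv, mem_sphere_iff_circle hp hv]

theorem eq_of_inner_eq_one {p z : E} (hp : ‖p‖ = 1) (hz : ‖z‖ ≤ 1) (h : inner ℂ p z = 1) :
    z = p := by
  have e := norm_sub_sq (𝕜 := ℂ) p z
  rw [h, hp] at e
  simp at e
  have : ‖p - z‖ ^ 2 ≤ 0 := by rw [e]; nlinarith [norm_nonneg z]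
  have h0 : ‖p - z‖ = 0 := by nlinarith [norm_nonneg (p - z)]
  exact (sub_eq_zero.1 (norm_eq_zero.1 h0)).symm

theorem closure_disc {s : ℝ} (hs : 0 < s) :
    closure {ζ : ℂ | ‖(s : ℂ) * ζ - 1‖ < 1} = {ζ : ℂ | ‖(s : ℂ) * ζ - 1‖ ≤ 1} := by
  have hsC : (s : ℂ) ≠ 0 := by exact_mod_cast hs.ne'
  have e : ∀ ζ : ℂ, ‖(s : ℂ) * ζ - 1‖ = s * dist ζ (s : ℂ)⁻¹ := by
    intro ζ
    have : (s : ℂ) * ζ - 1 = s * (ζ - (s : ℂ)⁻¹) := by field_simp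
    rw [this, norm_mul, Complex.norm_real, Real.norm_of_nonneg hs.le, dist_eq_norm]
  have e1 : {ζ : ℂ | ‖(s : ℂ) * ζ - 1‖ < 1} = ball (s : ℂ)⁻¹ (1 / s) := by
    ext ζ; rw [mem_ofPred_eq, mem_ball, e, lt_div_iff₀ hs, mul_comm]
  have e2 : {ζ : ℂ | ‖(s : ℂ) * ζ - 1‖ ≤ 1} = closedBall (s : ℂ)⁻¹ (1 / s) := by
    ext ζ; rw [mem_ofPred_eq, mem_closedBall, e, le_div_iff₀ hs, mul_comm]
  rw [e1, e2, closure_ball _ (by positivity)]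

/-- Maximum principle on the disc `|s ζ - 1| < 1`. -/
theorem norm_le_on_disc {s : ℝ} (hs : 0 < s) {h : ℂ → ℂ} {C : ℝ}
    (hc : ContinuousOn h {ζ : ℂ | ‖(s : ℂ) * ζ - 1‖ ≤ 1})
    (hd : DifferentiableOn ℂ h {ζ : ℂ | ‖(s : ℂ) * ζ - 1‖ < 1})
    (hb : ∀ ζ : ℂ, ‖(s : ℂ) * ζ - 1‖ = 1 → ‖h ζ‖ ≤ C) {ζ : ℂ} (hζ : ‖(s : ℂ) * ζ - 1‖ ≤ 1) :
    ‖h ζ‖ ≤ C := by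
  have hcl := closure_disc hs
  have hbdd : Bornology.IsBounded {ζ : ℂ | ‖(s : ℂ) * ζ - 1‖ < 1} := by
    refine (isBounded_ball (x := (0 : ℂ)) (r := 2 / s + 1)).subset fun z hz => ?_
    have h1 : ‖(s : ℂ) * z‖ - ‖(1 : ℂ)‖ ≤ ‖(s : ℂ) * z - 1‖ := norm_sub_norm_le _ _
    have hz' : ‖(s : ℂ) * z - 1‖ < 1 := hz
    rw [norm_mul, norm_one, Complex.norm_real, Real.norm_of_nonneg hs.le] at h1
    rw [mem_ball_zero_iff]
    have : ‖z‖ ≤ 2 / s := by rw [le_div_iff₀ hs]; linarith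
    linarith
  refine Complex.norm_le_of_forall_mem_frontier_norm_le hbdd ⟨hd, by rwa [hcl]⟩ ?_
    (by rw [hcl]; exact hζ)
  intro z hz
  have hop : IsOpen {ζ : ℂ | ‖(s : ℂ) * ζ - 1‖ < 1} := isOpen_lt (by fun_prop) continuous_const
  rw [hop.frontier_eq, hcl] at hz
  exact hb z (le_antisymm hz.1 (not_lt.1 hz.2))

/-- Extension data along the lines through the unit vector `p`: `f` is real-analytic at every point
of the unit sphere, and for every direction `v` normalised by `⟪p, v⟫ = -1` the function `g v` is
the holomorphic extension of `ζ ↦ f (p + ζ • v)` from the circle to the disc `|‖v‖² ζ - 1| ≤ 1`.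
Values of `g v` at other `v` are irrelevant. -/
structure LineExtension (f : E → ℂ) (p : E) (g : E → ℂ → ℂ) : Prop where
  norm_eq : ‖p‖ = 1
  analytic : ∀ z : E, ‖z‖ = 1 → AnalyticAt ℝ f z
  cont : ∀ v : E, inner ℂ p v = -1 →
    ContinuousOn (g v) {ζ : ℂ | ‖((‖v‖ ^ 2 : ℝ) : ℂ) * ζ - 1‖ ≤ 1}
  diff : ∀ v : E, inner ℂ p v = -1 →
    DifferentiableOn ℂ (g v) {ζ : ℂ | ‖((‖v‖ ^ 2 : ℝ) : ℂ) * ζ - 1‖ < 1}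
  eq : ∀ v : E, inner ℂ p v = -1 → ∀ ζ : ℂ, ‖((‖v‖ ^ 2 : ℝ) : ℂ) * ζ - 1‖ = 1 →
    g v ζ = f (p + ζ • v)

/-- The normalised direction of the line through `p` and `z`, so that
`z = p + (1 - ⟪p, z⟫) • dir p z`.  Meaningless (zero) when `⟪p, z⟫ = 1`. -/
noncomputable def dir (p z : E) : E := (1 - inner ℂ p z)⁻¹ • (z - p)

open Classical in
/-- The function assembled from the extensions along the lines through `p`.  The case `⟪p, z⟫ = 1`
occurs in the closed unit ball only at `z = p`. -/
noncomputable def glue (f : E → ℂ) (p : E) (g : E → ℂ → ℂ) (z : E) : ℂ :=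
  if inner ℂ p z = 1 then f p else g (dir p z) (1 - inner ℂ p z)

theorem inner_dir {p z : E} (hp : ‖p‖ = 1) (hz : inner ℂ p z ≠ 1) : inner ℂ p (dir p z) = -1 := by
  have h : (1 - inner ℂ p z : ℂ) ≠ 0 := sub_ne_zero.2 (Ne.symm hz)
  have hpp : inner ℂ p p = (1 : ℂ) := by rw [inner_self_eq_norm_sq_to_K, hp]; simp
  rw [dir, inner_smul_right, inner_sub_right, hpp]
  field_simp
  ring

theorem add_smul_dir {p z : E} (hz : inner ℂ p z ≠ 1) : p + (1 - inner ℂ p z) • dir p z = z := by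
  have h : (1 - inner ℂ p z : ℂ) ≠ 0 := sub_ne_zero.2 (Ne.symm hz)
  rw [dir, smul_smul, mul_inv_cancel₀ h, one_smul, add_sub_cancel]

theorem glue_add_smul {f : E → ℂ} {p : E} (g : E → ℂ → ℂ) {v : E} (hp : ‖p‖ = 1)
    (hv : inner ℂ p v = -1) {ζ : ℂ} (hζ : ζ ≠ 0) : glue f p g (p + ζ • v) = g v ζ := by
  have hpp : inner ℂ p p = (1 : ℂ) := by rw [inner_self_eq_norm_sq_to_K, hp]; simp
  have e : 1 - inner ℂ p (p + ζ • v) = ζ := by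
    rw [inner_add_right, inner_smul_right, hpp, hv]; ring
  have hne : inner ℂ p (p + ζ • v) ≠ 1 := by
    intro h; rw [h] at e; apply hζ; rw [← e]; ring
  rw [glue, if_neg hne, dir, e, add_sub_cancel_left, smul_smul, inv_mul_cancel₀ hζ, one_smul]

theorem glue_of_ne {f : E → ℂ} {p : E} {g : E → ℂ → ℂ} {z : E} (h : inner ℂ p z ≠ 1) :
    glue f p g z = g (dir p z) (1 - inner ℂ p z) := by
  rw [glue, if_neg h]

theorem glue_eq_on_sphere {f : E → ℂ} {p : E} {g : E → ℂ → ℂ} (H : LineExtension f p g) {z : E}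
    (hz : ‖z‖ = 1) : glue f p g z = f z := by
  by_cases h : inner ℂ p z = 1
  · rw [glue, if_pos h, eq_of_inner_eq_one H.norm_eq hz.le h]
  · have hd := inner_dir H.norm_eq h
    rw [glue_of_ne h, H.eq _ hd, add_smul_dir h]
    rw [← mem_sphere_iff_circle H.norm_eq hd, add_smul_dir h, hz]

theorem inner_ne_one_of_mem_ball {p z : E} (hp : ‖p‖ = 1) (hz : ‖z‖ < 1) : inner ℂ p z ≠ 1 := by
  intro h
  have := eq_of_inner_eq_one hp hz.le h
  rw [this, hp] at hz
  exact lt_irrefl _ hz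

theorem contDiffAt_inner_left (p : E) (z : E) : ContDiffAt ℝ 1 (fun z : E => inner ℂ p z) z :=
  ((innerSL ℂ p).restrictScalars ℝ).contDiff.contDiffAt

theorem contDiffAt_dir {p z : E} (hz : inner ℂ p z ≠ 1) : ContDiffAt ℝ 1 (dir p) z := by
  have h : (1 - inner ℂ p z : ℂ) ≠ 0 := sub_ne_zero.2 (Ne.symm hz)
  have h1 : ContDiffAt ℝ 1 (fun z : E => (1 - inner ℂ p z : ℂ)⁻¹) z :=
    (contDiffAt_const.sub (contDiffAt_inner_left p z)).inv h
  exact h1.smul (contDiffAt_id.sub contDiffAt_const)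

end Geometry

/-! ### Regularity of the glued function in the ball -/

section Regularity

variable {E : Type*} [NormedAddCommGroup E] [InnerProductSpace ℂ E]

theorem circle_point_mem {p v : E} (hp : ‖p‖ = 1) (hv : inner ℂ p v = -1) {x : ℂ}
    (hx : ‖x - 1‖ = 1) : ‖p + (x / ((‖v‖ ^ 2 : ℝ) : ℂ)) • v‖ = 1 := by
  have hs : 0 < ‖v‖ ^ 2 := one_pos.trans_le (one_le_norm_sq hp hv)
  have hsC : ((‖v‖ ^ 2 : ℝ) : ℂ) ≠ 0 := by exact_mod_cast hs.ne'
  rw [mem_sphere_iff_circle hp hv, mul_div_cancel₀ _ hsC, hx]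

/-- Cauchy's formula on each disc, transported to the fixed circle `|x - 1| = 1` by `x = s ζ`, so
that only the integrand depends on `z`. -/
theorem glue_eq_integral {f : E → ℂ} {p : E} {g : E → ℂ → ℂ} (H : LineExtension f p g) {z : E}
    (hz : ‖z‖ < 1) : glue f p g z = (2 * Real.pi * I : ℂ)⁻¹ •
      ∮ x in C(1, 1), (x - ((‖dir p z‖ ^ 2 : ℝ) : ℂ) * (1 - inner ℂ p z))⁻¹ •
        f (p + (x / ((‖dir p z‖ ^ 2 : ℝ) : ℂ)) • dir p z) := by
  have hne := inner_ne_one_of_mem_ball H.norm_eq hz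
  have hv := inner_dir H.norm_eq hne
  set v := dir p z with hvdef
  have hs : 0 < ‖v‖ ^ 2 := one_pos.trans_le (one_le_norm_sq H.norm_eq hv)
  have hsC : ((‖v‖ ^ 2 : ℝ) : ℂ) ≠ 0 := by exact_mod_cast hs.ne'
  have hzd : ‖((‖v‖ ^ 2 : ℝ) : ℂ) * (1 - inner ℂ p z) - 1‖ < 1 := by
    rw [← mem_ball_iff_disc H.norm_eq hv, add_smul_dir hne]; exact hz
  have hdc : DiffContOnCl ℂ (fun x => g v (x / ((‖v‖ ^ 2 : ℝ) : ℂ))) (ball 1 1) := by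
    refine ⟨(H.diff v hv).comp (by fun_prop) fun x hx => ?_, ?_⟩
    · show ‖((‖v‖ ^ 2 : ℝ) : ℂ) * (x / ((‖v‖ ^ 2 : ℝ) : ℂ)) - 1‖ < 1
      rw [mul_div_cancel₀ _ hsC, ← dist_eq_norm]; exact hx
    · rw [closure_ball _ one_ne_zero]
      refine (H.cont v hv).comp (by fun_prop) fun x hx => ?_
      show ‖((‖v‖ ^ 2 : ℝ) : ℂ) * (x / ((‖v‖ ^ 2 : ℝ) : ℂ)) - 1‖ ≤ 1
      rw [mul_div_cancel₀ _ hsC, ← dist_eq_norm]; exact hx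
  have hc := hdc.circleIntegral_sub_inv_smul
    (w := ((‖v‖ ^ 2 : ℝ) : ℂ) * (1 - inner ℂ p z)) (by rw [mem_ball, dist_eq_norm]; exact hzd)
  rw [mul_div_cancel_left₀ _ hsC] at hc
  have hcongr : (∮ x in C(1, 1), (x - ((‖v‖ ^ 2 : ℝ) : ℂ) * (1 - inner ℂ p z))⁻¹ •
        f (p + (x / ((‖v‖ ^ 2 : ℝ) : ℂ)) • v)) =
      ∮ x in C(1, 1), (x - ((‖v‖ ^ 2 : ℝ) : ℂ) * (1 - inner ℂ p z))⁻¹ •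
        g v (x / ((‖v‖ ^ 2 : ℝ) : ℂ)) := by
    refine circleIntegral.integral_congr zero_le_one fun x hx => ?_
    have hx1 : ‖x - 1‖ = 1 := by rw [← dist_eq_norm]; exact hx
    rw [H.eq v hv]
    rw [mul_div_cancel₀ _ hsC, hx1]
  rw [glue_of_ne hne, hcongr, hc, smul_smul, inv_mul_cancel₀ Complex.two_pi_I_ne_zero, one_smul]

/-- The integrand of the Cauchy integral is `C¹` in `z`, because `f` is real-analytic on the sphere. -/
theorem glue_real_differentiableAt {f : E → ℂ} {p : E} {g : E → ℂ → ℂ} (H : LineExtension f p g)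
    {z₁ : E} (hz : ‖z₁‖ < 1) : DifferentiableAt ℝ (glue f p g) z₁ := by
  have hne := inner_ne_one_of_mem_ball H.norm_eq hz
  have hv := inner_dir H.norm_eq hne
  have hs : 0 < ‖dir p z₁‖ ^ 2 := one_pos.trans_le (one_le_norm_sq H.norm_eq hv)
  have hsC : ((‖dir p z₁‖ ^ 2 : ℝ) : ℂ) ≠ 0 := by exact_mod_cast hs.ne'
  have hd := circ_param_real_differentiableAt (E := E) (c := 1) (R := 1) zero_le_one (p := z₁)
    (G := fun w : E × ℂ => (w.2 - ((‖dir p w.1‖ ^ 2 : ℝ) : ℂ) * (1 - inner ℂ p w.1))⁻¹ •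
        f (p + (w.2 / ((‖dir p w.1‖ ^ 2 : ℝ) : ℂ)) • dir p w.1)) (by
      intro x hx
      have hx1 : ‖x - 1‖ = 1 := by rw [← dist_eq_norm]; exact hx
      have hzd : ‖((‖dir p z₁‖ ^ 2 : ℝ) : ℂ) * (1 - inner ℂ p z₁) - 1‖ < 1 := by
        rw [← mem_ball_iff_disc H.norm_eq hv, add_smul_dir hne]; exact hz
      have hne2 : x - ((‖dir p z₁‖ ^ 2 : ℝ) : ℂ) * (1 - inner ℂ p z₁) ≠ 0 := by
        intro h
        rw [← sub_eq_zero.1 h, hx1] at hzd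
        exact lt_irrefl _ hzd
      have hdir : ContDiffAt ℝ 1 (fun w : E × ℂ => dir p w.1) (z₁, x) :=
        ContDiffAt.comp (f := Prod.fst) (z₁, x) (contDiffAt_dir hne) contDiffAt_fst
      have hin : ContDiffAt ℝ 1 (fun w : E × ℂ => (inner ℂ p w.1 : ℂ)) (z₁, x) :=
        ContDiffAt.comp (f := Prod.fst) (z₁, x) (contDiffAt_inner_left p z₁) contDiffAt_fst
      have hsq : ContDiffAt ℝ 1 (fun w : E × ℂ => ((‖dir p w.1‖ ^ 2 : ℝ) : ℂ)) (z₁, x) :=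
        Complex.ofRealCLM.contDiff.contDiffAt.comp (z₁, x) (hdir.norm_sq ℂ)
      have harg : ContDiffAt ℝ 1
          (fun w : E × ℂ => p + (w.2 / ((‖dir p w.1‖ ^ 2 : ℝ) : ℂ)) • dir p w.1) (z₁, x) := by
        simp only [div_eq_mul_inv]
        exact contDiffAt_const.add ((contDiffAt_snd.mul (hsq.inv hsC)).smul hdir)
      refine ((contDiffAt_snd.sub (hsq.mul (contDiffAt_const.sub hin))).inv hne2).smul ?_
      exact ContDiffAt.comp (g := f) (z₁, x)
        (H.analytic _ (circle_point_mem H.norm_eq hv hx1)).contDiffAt harg)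
  refine (hd.const_smul ((2 * Real.pi * I : ℂ)⁻¹)).congr_of_eventuallyEq ?_
  filter_upwards [(isOpen_lt continuous_norm continuous_const).mem_nhds hz] with z hz
  exact glue_eq_integral H hz

theorem glue_continuousOn_ball {f : E → ℂ} {p : E} {g : E → ℂ → ℂ} (H : LineExtension f p g) :
    ContinuousOn (glue f p g) (ball 0 1) := fun _ hz =>
  (glue_real_differentiableAt H (mem_ball_zero_iff.1 hz)).continuousAt.continuousWithinAt

/-- Holomorphy of `glue` in the directions orthogonal to `p`, that is, across the lines through
`p`. -/
theorem glue_differentiableAt_orthogonal {f : E → ℂ} {p : E} {g : E → ℂ → ℂ}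
    (H : LineExtension f p g) {z : E} (hz : ‖z‖ < 1) {η : E} (hη : inner ℂ p η = 0)
    (hη0 : η ≠ 0) : DifferentiableAt ℂ (fun τ : ℂ => glue f p g (z + τ • η)) 0 := by
  have hne := inner_ne_one_of_mem_ball H.norm_eq hz
  have hv := inner_dir H.norm_eq hne
  have hζ0 : (1 - inner ℂ p z : ℂ) ≠ 0 := sub_ne_zero.2 (Ne.symm hne)
  have hzv := add_smul_dir hne
  set v := dir p z with hvdef
  set ζ₀ : ℂ := 1 - inner ℂ p z with hζ₀
  have hvt : ∀ t : ℂ, inner ℂ p (v + t • η) = -1 := fun t => by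
    rw [inner_add_right, inner_smul_right, hη, hv]; ring
  set s : ℂ → ℝ := fun t => ‖v + t • η‖ ^ 2 with hs
  have hs1 : ∀ t, 1 ≤ s t := fun t => one_le_norm_sq H.norm_eq (hvt t)
  have hsc : Continuous s := by fun_prop
  obtain ⟨ε, hε, C, Φ, hΦ, hC, hΦf⟩ := exists_complexification_plane (H.analytic p H.norm_eq) v η
  -- polarized form of `‖v + t • η‖²`: `N t (conj t) = s t`
  set N : ℂ → ℂ → ℂ := fun l m =>
    (inner ℂ v v : ℂ) + l * inner ℂ v η + m * inner ℂ η v + l * m * inner ℂ η η with hN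
  have hNd : Differentiable ℂ fun x : ℂ × ℂ => N x.1 x.2 := by simp only [hN]; fun_prop
  have hNs : ∀ t, N t ((starRingEnd ℂ) t) = s t := by
    intro t
    have e : ((s t : ℝ) : ℂ) = inner ℂ (v + t • η) (v + t • η) := by
      rw [inner_self_eq_norm_sq_to_K]; simp [hs]
    rw [e]
    simp only [hN, inner_add_left, inner_add_right, inner_smul_left, inner_smul_right]
    ring
  have hc0 : 0 < ‖(inner ℂ η η : ℂ)‖ := norm_pos_iff.2 (by simpa using hη0)
  -- the term `l m ‖η‖²` dominates when both variables are large
  obtain ⟨R₀, hgrow⟩ : ∃ R₀ : ℝ, ∀ l m : ℂ, R₀ ≤ ‖l‖ → R₀ ≤ ‖m‖ →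
      ‖(inner ℂ η η : ℂ)‖ / 2 * (‖l‖ * ‖m‖) ≤ ‖N l m‖ := by
    set c := ‖(inner ℂ η η : ℂ)‖ with hc
    set A := ‖(inner ℂ v v : ℂ)‖ + ‖(inner ℂ v η : ℂ)‖ + ‖(inner ℂ η v : ℂ)‖ with hA
    have a1 := norm_nonneg (inner ℂ v v : ℂ)
    have a2 := norm_nonneg (inner ℂ v η : ℂ)
    have a3 := norm_nonneg (inner ℂ η v : ℂ)
    refine ⟨max 1 (4 * A / c), fun l m hl hm => ?_⟩
    have hl1 : 1 ≤ ‖l‖ := (le_max_left _ _).trans hl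
    have hm1 : 1 ≤ ‖m‖ := (le_max_left _ _).trans hm
    have hl2 : 4 * A ≤ ‖l‖ * c := by rw [← div_le_iff₀ hc0]; exact (le_max_right _ _).trans hl
    have hm2 : 4 * A ≤ ‖m‖ * c := by rw [← div_le_iff₀ hc0]; exact (le_max_right _ _).trans hm
    have hlow : ‖(inner ℂ v v : ℂ) + l * inner ℂ v η + m * inner ℂ η v‖ ≤
        ‖(inner ℂ v v : ℂ)‖ + ‖l‖ * ‖(inner ℂ v η : ℂ)‖ + ‖m‖ * ‖(inner ℂ η v : ℂ)‖ := by
      refine (norm_add₃_le).trans ?_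
      rw [norm_mul, norm_mul]
    have htri : ‖l * m * (inner ℂ η η : ℂ)‖ -
        ‖(inner ℂ v v : ℂ) + l * inner ℂ v η + m * inner ℂ η v‖ ≤ ‖N l m‖ := by
      have := norm_sub_le_norm_add (l * m * (inner ℂ η η : ℂ))
        ((inner ℂ v v : ℂ) + l * inner ℂ v η + m * inner ℂ η v)
      have e : N l m = l * m * inner ℂ η η +
          (inner ℂ v v + l * inner ℂ v η + m * inner ℂ η v) := by simp only [hN]; ring
      rwa [e]
    rw [norm_mul, norm_mul, ← hc] at htri
    have b1 : (‖(inner ℂ v v : ℂ)‖ + ‖(inner ℂ v η : ℂ)‖) * ‖l‖ ≤ A * ‖l‖ := by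
      gcongr; linarith
    have b2 : ‖(inner ℂ η v : ℂ)‖ * ‖m‖ ≤ A * ‖m‖ := by gcongr; linarith
    have b3 := mul_le_mul_of_nonneg_right hm2 (norm_nonneg l)
    have b4 := mul_le_mul_of_nonneg_right hl2 (norm_nonneg m)
    have b5 := mul_le_mul_of_nonneg_left hl1 a1
    nlinarith
  have hK := exists_holomorphic_in_parameter (g := fun t => g (v + t • η)) hε hΦ hC hNd
    (half_pos hc0) hgrow hs1 hNs
    (fun t => H.cont _ (hvt t)) (fun t => H.diff _ (hvt t)) (by
      intro t ζ h1 h2 h3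
      have hst : 0 < s t := one_pos.trans_le (hs1 t)
      have hconj := conj_eq_of_mem_circle hst h1
      rw [H.eq _ (hvt t) _ h1, KK, hNs t, ← hconj, ← map_mul, hΦf _ _ h2 h3]
      congr 1
      rw [smul_add, smul_smul, add_assoc])
  have hjc : ContinuousOn (Function.uncurry fun t => g (v + t • η))
      {x : ℂ × ℂ | ‖(s x.1 : ℂ) * x.2 - 1‖ < 1} := by
    have hmaps : ∀ x : ℂ × ℂ, ‖(s x.1 : ℂ) * x.2 - 1‖ < 1 → ‖p + x.2 • (v + x.1 • η)‖ < 1 :=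
      fun x hx => (mem_ball_iff_disc H.norm_eq (hvt x.1) x.2).2 hx
    have hcomp : ContinuousOn (fun x : ℂ × ℂ => glue f p g (p + x.2 • (v + x.1 • η)))
        {x : ℂ × ℂ | ‖(s x.1 : ℂ) * x.2 - 1‖ < 1} :=
      (glue_continuousOn_ball H).comp (by fun_prop) fun x hx => mem_ball_zero_iff.2 (hmaps x hx)
    refine hcomp.congr fun x hx => ?_
    refine (glue_add_smul g H.norm_eq (hvt x.1) ?_).symm
    intro h0
    have hx' : ‖(s x.1 : ℂ) * x.2 - 1‖ < 1 := hx
    rw [h0] at hx'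
    simp at hx'
  have hζd : ‖(s 0 : ℂ) * ζ₀ - 1‖ < 1 := by
    have := (mem_ball_iff_disc H.norm_eq (hvt 0) ζ₀).1 (by rw [zero_smul, add_zero, hzv]; exact hz)
    exact this
  have hfin := differentiableAt_in_parameter (g := fun t => g (v + t • η)) hsc
    (fun t => one_pos.trans_le (hs1 t)) (fun t => H.diff _ (hvt t)) hjc hK hζd
  -- `z + τ • η = p + ζ₀ • (v + (τ / ζ₀) • η)`: moving `z` by `τ • η` changes only the direction
  have hcomp : DifferentiableAt ℂ (fun τ : ℂ => g (v + (τ / ζ₀) • η) ζ₀) 0 :=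
    DifferentiableAt.comp (g := fun t : ℂ => g (v + t • η) ζ₀) (f := fun τ : ℂ => τ / ζ₀) 0
      (by rw [zero_div]; exact hfin) (by fun_prop)
  refine hcomp.congr_of_eventuallyEq (Filter.Eventually.of_forall fun τ => ?_)
  simp only
  rw [← glue_add_smul (f := f) g H.norm_eq (hvt (τ / ζ₀)) hζ0]
  congr 1
  rw [smul_add, smul_smul, mul_div_cancel₀ _ hζ0, ← add_assoc, hzv]

end Regularity

/-! ### Holomorphy and continuity up to the sphere -/

section Boundary

variable {E : Type*} [NormedAddCommGroup E] [InnerProductSpace ℂ E]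

/-- A real differentiable function is complex differentiable at `z` if it is so along complex lines in
a set of directions whose pairwise sums are everything. -/
theorem differentiableAt_complex_of_directions {F : E → ℂ} {z : E} (hF : DifferentiableAt ℝ F z)
    {S : Set E} (hS : ∀ u ∈ S, DifferentiableAt ℂ (fun τ : ℂ => F (z + τ • u)) 0)
    (hspan : ∀ u : E, ∃ u₁ ∈ S, ∃ u₂ ∈ S, u = u₁ + u₂) : DifferentiableAt ℂ F z := by
  obtain ⟨A, hA⟩ := hF
  have hlin : ∀ u ∈ S, ∀ c : ℂ, A (c • u) = c * A u := by
    intro u hu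
    have hline : HasFDerivAt (fun τ : ℂ => z + τ • u)
        ((ContinuousLinearMap.toSpanSingleton ℂ u).restrictScalars ℝ) 0 :=
      (((ContinuousLinearMap.toSpanSingleton ℂ u).hasFDerivAt (x := 0)).restrictScalars ℝ).const_add z
    have h1 : HasFDerivAt (fun τ : ℂ => F (z + τ • u))
        (A.comp ((ContinuousLinearMap.toSpanSingleton ℂ u).restrictScalars ℝ)) 0 :=
      HasFDerivAt.comp (g := F) (f := fun τ : ℂ => z + τ • u) 0
        (by rw [zero_smul, add_zero]; exact hA) hline
    have h2 := (hS u hu).hasFDerivAt.restrictScalars ℝ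
    have huniq := h1.unique h2
    intro c
    have hc : ∀ c : ℂ, A (c • u) = fderiv ℂ (fun τ : ℂ => F (z + τ • u)) 0 c := fun c => by
      have := DFunLike.congr_fun huniq c
      simpa using this
    have h1c := hc 1
    rw [one_smul] at h1c
    rw [hc c, h1c, ← smul_eq_mul c, ← map_smul, smul_eq_mul, mul_one]
  have hlin' : ∀ (c : ℂ) (u : E), A (c • u) = c • A u := by
    intro c u
    obtain ⟨u₁, hu₁, u₂, hu₂, rfl⟩ := hspan u
    rw [smul_add, map_add, map_add, hlin u₁ hu₁, hlin u₂ hu₂, smul_eq_mul, mul_add]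
  let B : E →L[ℂ] ℂ :=
    { toFun := A, map_add' := A.map_add, map_smul' := hlin', cont := A.continuous }
  exact (hasFDerivAt_of_restrictScalars ℝ (f' := B) hA (by ext u; rfl)).differentiableAt

theorem glue_differentiableOn {f : E → ℂ} {p : E} {g : E → ℂ → ℂ}
    (H : LineExtension f p g) : DifferentiableOn ℂ (glue f p g) (ball 0 1) := by
  intro z hz
  have hz : ‖z‖ < 1 := mem_ball_zero_iff.1 hz
  refine DifferentiableAt.differentiableWithinAt ?_
  have hne := inner_ne_one_of_mem_ball H.norm_eq hz
  have hv := inner_dir H.norm_eq hne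
  have hζ0 : (1 - inner ℂ p z : ℂ) ≠ 0 := sub_ne_zero.2 (Ne.symm hne)
  have hzv := add_smul_dir hne
  set v := dir p z with hvdef
  set ζ₀ : ℂ := 1 - inner ℂ p z with hζ₀
  -- every vector is a multiple of `v` plus a vector orthogonal to `p`: `u = -⟪p, u⟫ v + (u + ⟪p, u⟫ v)`
  refine differentiableAt_complex_of_directions (glue_real_differentiableAt H hz)
    (S := {u | (∃ α : ℂ, u = α • v) ∨ inner ℂ p u = 0}) ?_ ?_
  · rintro u (⟨α, rfl⟩ | hu)
    · have hζd : ‖((‖v‖ ^ 2 : ℝ) : ℂ) * ζ₀ - 1‖ < 1 :=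
        (mem_ball_iff_disc H.norm_eq hv ζ₀).1 (by rw [hzv]; exact hz)
      have hg : DifferentiableAt ℂ (g v) (ζ₀ + 0 * α) := by
        rw [zero_mul, add_zero]
        exact (H.diff v hv).differentiableAt
          ((isOpen_lt (by fun_prop) continuous_const).mem_nhds hζd)
      have hcomp : DifferentiableAt ℂ (fun τ : ℂ => g v (ζ₀ + τ * α)) 0 :=
        DifferentiableAt.comp (g := g v) (f := fun τ : ℂ => ζ₀ + τ * α) 0 hg (by fun_prop)
      refine hcomp.congr_of_eventuallyEq ?_
      have hcont : ContinuousAt (fun τ : ℂ => ζ₀ + τ * α) 0 := by fun_prop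
      filter_upwards [hcont.eventually_ne (y := (0 : ℂ)) (by simpa using hζ0)] with τ hτ
      rw [← glue_add_smul (f := f) g H.norm_eq hv hτ, add_smul, ← add_assoc, hzv, smul_smul]
    · by_cases hu0 : u = 0
      · simp [hu0]
      · exact glue_differentiableAt_orthogonal H hz hu hu0
  · intro u
    refine ⟨(-inner ℂ p u : ℂ) • v, Or.inl ⟨_, rfl⟩, u + (inner ℂ p u : ℂ) • v, Or.inr ?_, ?_⟩
    · rw [inner_add_right, inner_smul_right, hv]; ring
    · rw [neg_smul]; abel

/-- Continuity at sphere points other than `p`.  Rescaling all discs to the unit disc, the extensions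
are functions `Γ z` there; their boundary values depend on `z` continuously in the uniform norm, and
hence so do the `Γ z` by the maximum principle. -/
theorem glue_continuousWithinAt_of_ne {f : E → ℂ} {p : E} {g : E → ℂ → ℂ}
    (H : LineExtension f p g) {z₁ : E} (hz₁ : ‖z₁‖ = 1) (hne : inner ℂ p z₁ ≠ 1) :
    ContinuousWithinAt (glue f p g) (closedBall 0 1) z₁ := by
  have hv := inner_dir H.norm_eq hne
  have hopen : ∀ᶠ z in nhds z₁, inner ℂ p z ≠ 1 :=
    (contDiffAt_inner_left p z₁).continuousAt.eventually_ne hne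
  set S : E → ℝ := fun z => ‖dir p z‖ ^ 2 with hS
  have hdirc : ContinuousAt (dir p) z₁ := (contDiffAt_dir hne).continuousAt
  have hSc : ContinuousAt (fun z => ((S z : ℝ) : ℂ)) z₁ :=
    Complex.continuous_ofReal.continuousAt.comp (hdirc.norm.pow 2)
  have hSpos : ∀ z, inner ℂ p z ≠ 1 → 0 < S z := fun z hz =>
    one_pos.trans_le (one_le_norm_sq H.norm_eq (inner_dir H.norm_eq hz))
  have hSC : ∀ z, inner ℂ p z ≠ 1 → ((S z : ℝ) : ℂ) ≠ 0 := fun z hz => by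
    exact_mod_cast (hSpos z hz).ne'
  -- `Y z` is the coordinate of `z` in its line, normalised so that the disc is the unit disc
  set Y : E → ℂ := fun z => (S z : ℂ) * (1 - inner ℂ p z) - 1 with hY
  have hYc : ContinuousAt Y z₁ :=
    (hSc.mul (continuousAt_const.sub (contDiffAt_inner_left p z₁).continuousAt)).sub
      continuousAt_const
  have hYle : ∀ z, ‖z‖ ≤ 1 → inner ℂ p z ≠ 1 → ‖Y z‖ ≤ 1 := fun z hz h => by
    have := (mem_closedBall_iff_disc H.norm_eq (inner_dir H.norm_eq h) (1 - inner ℂ p z)).1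
      (by rw [add_smul_dir h]; exact hz)
    exact this
  set Γ : E → ℂ → ℂ := fun z y => g (dir p z) ((y + 1) / (S z : ℂ)) with hΓ
  have hcancel : ∀ z, inner ℂ p z ≠ 1 → ∀ y : ℂ, (S z : ℂ) * ((y + 1) / (S z : ℂ)) - 1 = y :=
    fun z hz y => by rw [mul_div_cancel₀ _ (hSC z hz)]; ring
  have hΓc : ∀ z, inner ℂ p z ≠ 1 → ContinuousOn (Γ z) (closedBall 0 1) := fun z hz =>
    (H.cont _ (inner_dir H.norm_eq hz)).comp (by fun_prop) fun y hy => by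
      show ‖(S z : ℂ) * ((y + 1) / (S z : ℂ)) - 1‖ ≤ 1
      rw [hcancel z hz]; exact mem_closedBall_zero_iff.1 hy
  have hΓd : ∀ z, inner ℂ p z ≠ 1 → DifferentiableOn ℂ (Γ z) (ball 0 1) := fun z hz =>
    (H.diff _ (inner_dir H.norm_eq hz)).comp (by fun_prop) fun y hy => by
      show ‖(S z : ℂ) * ((y + 1) / (S z : ℂ)) - 1‖ < 1
      rw [hcancel z hz]; exact mem_ball_zero_iff.1 hy
  have hΓf : ∀ z, inner ℂ p z ≠ 1 → ∀ y : ℂ, ‖y‖ = 1 →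
      Γ z y = f (p + ((y + 1) / (S z : ℂ)) • dir p z) := fun z hz y hy => by
    refine H.eq _ (inner_dir H.norm_eq hz) _ ?_
    have := hcancel z hz y
    rw [this, hy]
  have hglue : ∀ z, inner ℂ p z ≠ 1 → glue f p g z = Γ z (Y z) := fun z hz => by
    rw [glue_of_ne hz]
    simp only [hΓ, hY]
    rw [sub_add_cancel, mul_div_cancel_left₀ _ (hSC z hz)]
  rw [Metric.continuousWithinAt_iff']
  intro e he
  -- uniform closeness of the boundary values
  have hunif : ∀ᶠ z in nhds z₁, ∀ y ∈ sphere (0 : ℂ) 1,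
      ‖f (p + ((y + 1) / (S z : ℂ)) • dir p z) - f (p + ((y + 1) / (S z₁ : ℂ)) • dir p z₁)‖
        < e / 2 := by
    refine (isCompact_sphere (0 : ℂ) 1).eventually_forall_of_forall_eventually fun y hy => ?_
    have hy1 : ‖y‖ = 1 := mem_sphere_zero_iff_norm.1 hy
    have hfc : ContinuousAt f (p + ((y + 1) / (S z₁ : ℂ)) • dir p z₁) := by
      refine (H.analytic _ ?_).continuousAt
      rw [mem_sphere_iff_circle H.norm_eq hv]
      have := hcancel z₁ hne y
      rw [this, hy1]
    have hd1 : ContinuousAt (fun w : E × ℂ => dir p w.1) (z₁, y) :=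
      ContinuousAt.comp (f := Prod.fst) (x := (z₁, y)) hdirc continuousAt_fst
    have hS1 : ContinuousAt (fun w : E × ℂ => (S w.1 : ℂ)) (z₁, y) :=
      ContinuousAt.comp (g := fun z => ((S z : ℝ) : ℂ)) (f := Prod.fst) (x := (z₁, y)) hSc
        continuousAt_fst
    have h1 : ContinuousAt (fun w : E × ℂ => f (p + ((w.2 + 1) / (S w.1 : ℂ)) • dir p w.1))
        (z₁, y) :=
      ContinuousAt.comp (g := f)
        (f := fun w : E × ℂ => p + ((w.2 + 1) / (S w.1 : ℂ)) • dir p w.1) hfc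
        (continuousAt_const.add
          (((continuousAt_snd.add continuousAt_const).div₀ hS1 (hSC z₁ hne)).smul hd1))
    have h2 : ContinuousAt (fun w : E × ℂ => f (p + ((w.2 + 1) / (S z₁ : ℂ)) • dir p z₁))
        (z₁, y) :=
      ContinuousAt.comp (g := f)
        (f := fun w : E × ℂ => p + ((w.2 + 1) / (S z₁ : ℂ)) • dir p z₁) hfc (by fun_prop)
    have h3 := (h1.sub h2).norm
    exact h3.tendsto.eventually_lt_const (by simpa using half_pos he)
  have hΓ1 : ContinuousWithinAt (fun z => Γ z₁ (Y z)) (closedBall 0 1 ∩ {z | inner ℂ p z ≠ 1}) z₁ :=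
    ContinuousWithinAt.comp (g := Γ z₁) (f := Y) (t := closedBall 0 1)
      (hΓc z₁ hne (Y z₁) (mem_closedBall_zero_iff.2 (hYle z₁ hz₁.le hne)))
      hYc.continuousWithinAt fun z hz =>
        mem_closedBall_zero_iff.2 (hYle z (mem_closedBall_zero_iff.1 hz.1) hz.2)
  have hΓ2 := Metric.continuousWithinAt_iff'.1 hΓ1 (e / 2) (half_pos he)
  rw [nhdsWithin_inter_of_mem' (nhdsWithin_le_nhds hopen)] at hΓ2
  filter_upwards [hΓ2, nhdsWithin_le_nhds hunif, nhdsWithin_le_nhds hopen, self_mem_nhdsWithin]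
    with z h2 hu ho hzb
  have hzb : ‖z‖ ≤ 1 := mem_closedBall_zero_iff.1 hzb
  rw [hglue z ho, hglue z₁ hne]
  have hmaxp : ‖Γ z (Y z) - Γ z₁ (Y z)‖ ≤ e / 2 := by
    refine Complex.norm_le_of_forall_mem_frontier_norm_le (f := fun y => Γ z y - Γ z₁ y)
      (isBounded_ball (x := (0 : ℂ)) (r := 1)) ⟨(hΓd z ho).sub (hΓd z₁ hne), ?_⟩ ?_ ?_
    · rw [closure_ball _ one_ne_zero]; exact (hΓc z ho).sub (hΓc z₁ hne)
    · intro y hy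
      rw [frontier_ball _ one_ne_zero] at hy
      have hy1 : ‖y‖ = 1 := mem_sphere_zero_iff_norm.1 hy
      rw [hΓf z ho y hy1, hΓf z₁ hne y hy1]
      exact (hu y hy).le
    · rw [closure_ball _ one_ne_zero]; exact mem_closedBall_zero_iff.2 (hYle z hzb ho)
  calc dist (Γ z (Y z)) (Γ z₁ (Y z₁)) ≤ dist (Γ z (Y z)) (Γ z₁ (Y z)) + dist (Γ z₁ (Y z)) (Γ z₁ (Y z₁)) :=
        dist_triangle _ _ _
    _ < e / 2 + e / 2 := add_lt_add_of_le_of_lt (by rwa [dist_eq_norm]) h2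
    _ = e := add_halves e

/-- `f` is Lipschitz at `p` on the unit sphere: near `p` by differentiability, elsewhere by
boundedness. -/
theorem exists_lipschitz_at [ProperSpace E] {f : E → ℂ} {p : E} (hp : ‖p‖ = 1)
    (hf : ∀ z : E, ‖z‖ = 1 → AnalyticAt ℝ f z) :
    ∃ L : ℝ, 0 ≤ L ∧ ∀ z : E, ‖z‖ = 1 → ‖f z - f p‖ ≤ L * ‖z - p‖ := by
  have hO := (hf p hp).differentiableAt.isBigO_sub
  obtain ⟨c, hc⟩ := hO.bound
  obtain ⟨δ, hδ, hball⟩ := Metric.eventually_nhds_iff.1 hc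
  have hcont : ContinuousOn (fun z => f z - f p) (sphere 0 1) := fun z hz =>
    ((hf z (mem_sphere_zero_iff_norm.1 hz)).continuousAt.sub continuousAt_const).continuousWithinAt
  obtain ⟨B, hB⟩ := (isCompact_sphere (0 : E) 1).exists_bound_of_continuousOn hcont
  refine ⟨max |c| (|B| / δ), by positivity, fun z hz => ?_⟩
  by_cases h : dist z p < δ
  · exact (hball h).trans (by gcongr; exact (le_abs_self c).trans (le_max_left _ _))
  · rw [not_lt, dist_eq_norm] at h
    calc ‖f z - f p‖ ≤ |B| := (hB z (mem_sphere_zero_iff_norm.2 hz)).trans (le_abs_self B)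
      _ = |B| / δ * δ := by field_simp
      _ ≤ max |c| (|B| / δ) * ‖z - p‖ := by gcongr; exact le_max_right _ _

/-- Continuity at `p`, where the discs degenerate.  On the circle of the line,
`|f (p + ζ v) - f p|² ≤ L² ‖ζ v‖² = 2 L² Re ζ`, so `(g v - f p)² / ζ` is bounded by `2 L²` on the
circle and then on the disc; the denominator is moved off `0` by a small `e > 0`. -/
theorem glue_bound_near_center [ProperSpace E] {f : E → ℂ} {p : E} {g : E → ℂ → ℂ}
    (H : LineExtension f p g) :
    ∃ L : ℝ, ∀ z : E, ‖z‖ ≤ 1 → ‖glue f p g z - f p‖ ^ 2 ≤ L * ‖z - p‖ := by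
  obtain ⟨L, hL0, hL⟩ := exists_lipschitz_at H.norm_eq H.analytic
  refine ⟨2 * L ^ 2, fun z hz => ?_⟩
  by_cases hne : inner ℂ p z = 1
  · rw [glue, if_pos hne, sub_self, norm_zero]
    have : 0 ≤ 2 * L ^ 2 * ‖z - p‖ := by positivity
    simpa using this
  have hv := inner_dir H.norm_eq hne
  have hzv := add_smul_dir hne
  rw [glue_of_ne hne]
  set v := dir p z with hvdef
  set ζ₀ : ℂ := 1 - inner ℂ p z with hζ₀
  have hs : 0 < ‖v‖ ^ 2 := one_pos.trans_le (one_le_norm_sq H.norm_eq hv)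
  have hdisc : ‖((‖v‖ ^ 2 : ℝ) : ℂ) * ζ₀ - 1‖ ≤ 1 :=
    (mem_closedBall_iff_disc H.norm_eq hv ζ₀).1 (by rw [hzv]; exact hz)
  have hre : ∀ ζ : ℂ, ‖((‖v‖ ^ 2 : ℝ) : ℂ) * ζ - 1‖ ≤ 1 → 0 ≤ ζ.re := by
    intro ζ h
    have h1 := (mem_closedBall_iff_disc H.norm_eq hv ζ).2 h
    have h2 := norm_add_smul_sq H.norm_eq hv ζ
    have h3 : ‖p + ζ • v‖ ^ 2 ≤ 1 := by nlinarith [norm_nonneg (p + ζ • v)]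
    have h4 : 0 ≤ ‖ζ‖ ^ 2 * ‖v‖ ^ 2 := by positivity
    linarith
  -- `(g - f p)² / (ζ + e)` is bounded by `2 L²` on the circle
  have hkey : ∀ e : ℝ, 0 < e → ‖g v ζ₀ - f p‖ ^ 2 ≤ 2 * L ^ 2 * (‖ζ₀‖ + e) := by
    intro e he
    have hpos : ∀ ζ : ℂ, ‖((‖v‖ ^ 2 : ℝ) : ℂ) * ζ - 1‖ ≤ 1 → ζ.re + e ≤ ‖ζ + e‖ := by
      intro ζ _
      have := Complex.re_le_norm (ζ + e)
      simpa using this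
    have hne0 : ∀ ζ : ℂ, ‖((‖v‖ ^ 2 : ℝ) : ℂ) * ζ - 1‖ ≤ 1 → ζ + e ≠ 0 := by
      intro ζ h h0
      have h1 := hpos ζ h
      rw [h0, norm_zero] at h1
      linarith [hre ζ h]
    have hb := norm_le_on_disc hs (h := fun ζ => (g v ζ - f p) ^ 2 * (ζ + e)⁻¹) (C := 2 * L ^ 2)
      (((H.cont v hv).sub continuousOn_const).pow 2 |>.mul
        (ContinuousOn.inv₀ (by fun_prop) hne0))
      ((((H.diff v hv).sub (differentiableOn_const _)).pow 2).mul
        (DifferentiableOn.inv (by fun_prop) fun ζ h =>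
          hne0 ζ (show ‖((‖v‖ ^ 2 : ℝ) : ℂ) * ζ - 1‖ < 1 from h).le))
      (by
        intro ζ h
        have hsph := (mem_sphere_iff_circle H.norm_eq hv ζ).2 h
        have h1 := hL _ hsph
        rw [add_sub_cancel_left] at h1
        have h2 := norm_add_smul_sq H.norm_eq hv ζ
        rw [hsph] at h2
        have h3 : ‖ζ • v‖ ^ 2 = 2 * ζ.re := by rw [norm_smul, mul_pow]; linarith
        have h4 := hpos ζ h.le
        have h5 := hre ζ h.le
        rw [H.eq v hv ζ h, norm_mul, norm_pow, norm_inv, ← div_eq_mul_inv,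
          div_le_iff₀ (by linarith)]
        calc ‖f (p + ζ • v) - f p‖ ^ 2 ≤ (L * ‖ζ • v‖) ^ 2 := by gcongr
          _ = 2 * L ^ 2 * ζ.re := by rw [mul_pow, h3]; ring
          _ ≤ 2 * L ^ 2 * ‖ζ + e‖ := by gcongr; linarith) hdisc
    have hn : 0 < ‖ζ₀ + e‖ := norm_pos_iff.2 (hne0 ζ₀ hdisc)
    rw [norm_mul, norm_pow, norm_inv, ← div_eq_mul_inv, div_le_iff₀ hn] at hb
    refine hb.trans ?_
    gcongr
    refine (norm_add_le _ _).trans_eq ?_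
    rw [Complex.norm_real, Real.norm_of_nonneg he.le]
  have hlim : ‖g v ζ₀ - f p‖ ^ 2 ≤ 2 * L ^ 2 * ‖ζ₀‖ := by
    have ht : Filter.Tendsto (fun e : ℝ => 2 * L ^ 2 * (‖ζ₀‖ + e)) (nhdsWithin 0 (Ioi 0))
        (nhds (2 * L ^ 2 * (‖ζ₀‖ + 0))) :=
      ((by fun_prop : Continuous fun e : ℝ => 2 * L ^ 2 * (‖ζ₀‖ + e)).tendsto 0).mono_left
        nhdsWithin_le_nhds
    rw [add_zero] at ht
    refine ge_of_tendsto ht ?_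
    filter_upwards [self_mem_nhdsWithin] with e he
    exact hkey e he
  refine hlim.trans ?_
  gcongr
  have hpp : inner ℂ p p = (1 : ℂ) := by rw [inner_self_eq_norm_sq_to_K, H.norm_eq]; simp
  have e1 : ζ₀ = -inner ℂ p (z - p) := by rw [inner_sub_right, hpp, hζ₀]; ring
  rw [e1, norm_neg]
  refine (norm_inner_le_norm _ _).trans_eq ?_
  rw [H.norm_eq, one_mul]

theorem glue_continuousOn [ProperSpace E] {f : E → ℂ} {p : E} {g : E → ℂ → ℂ}
    (H : LineExtension f p g) : ContinuousOn (glue f p g) (closedBall 0 1) := by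
  intro z hz
  rcases (mem_closedBall_zero_iff.1 hz).lt_or_eq with hlt | heq
  · exact (glue_real_differentiableAt H hlt).continuousAt.continuousWithinAt
  by_cases hne : inner ℂ p z = 1
  · obtain rfl := eq_of_inner_eq_one H.norm_eq heq.le hne
    obtain ⟨L, hL⟩ := glue_bound_near_center H
    have hval : glue f z g z = f z := glue_eq_on_sphere H heq
    have h0 : Filter.Tendsto (fun w => L * ‖w - z‖) (nhdsWithin z (closedBall 0 1)) (nhds 0) := by
      have : Filter.Tendsto (fun w => L * ‖w - z‖) (nhds z) (nhds (L * ‖z - z‖)) :=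
        (by fun_prop : Continuous fun w => L * ‖w - z‖).tendsto z
      rw [sub_self, norm_zero, mul_zero] at this
      exact this.mono_left nhdsWithin_le_nhds
    have h1 : Filter.Tendsto (fun w => ‖glue f z g w - f z‖ ^ 2) (nhdsWithin z (closedBall 0 1))
        (nhds 0) := by
      refine squeeze_zero' (Filter.Eventually.of_forall fun w => by positivity) ?_ h0
      filter_upwards [self_mem_nhdsWithin] with w hw
      exact hL w (mem_closedBall_zero_iff.1 hw)
    rw [ContinuousWithinAt, hval, tendsto_iff_norm_sub_tendsto_zero]
    have h2 := h1.sqrt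
    simpa [Real.sqrt_sq] using h2
  · exact glue_continuousWithinAt_of_ne H heq hne

end Boundary

/-- **Testing analyticity on the ball by the lines through a boundary point.**
If a real-analytic function on the unit sphere extends holomorphically along every
complex affine line through a fixed boundary point `p₀` that meets the open ball, then
it extends holomorphically to the whole ball. -/
theorem ball_extension_lines_through_boundary_point
    {n : ℕ} (hn : 2 ≤ n)
    (f : EuclideanSpace ℂ (Fin n) → ℂ)
    (V : Set (EuclideanSpace ℂ (Fin n))) (hV : IsOpen V)
    (hsV : sphere (0 : EuclideanSpace ℂ (Fin n)) 1 ⊆ V) (hf : AnalyticOnNhd ℝ f V)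
    (p₀ : EuclideanSpace ℂ (Fin n)) (hp₀ : p₀ ∈ sphere (0 : EuclideanSpace ℂ (Fin n)) 1)
    (hext : ∀ v : EuclideanSpace ℂ (Fin n), v ≠ 0 →
      {ζ : ℂ | p₀ + ζ • v ∈ ball (0 : EuclideanSpace ℂ (Fin n)) 1}.Nonempty →
      ExtendsAlongLine f p₀ v) :
    ∃ F : EuclideanSpace ℂ (Fin n) → ℂ,
      ContinuousOn F (closedBall (0 : EuclideanSpace ℂ (Fin n)) 1) ∧
      DifferentiableOn ℂ F (ball (0 : EuclideanSpace ℂ (Fin n)) 1) ∧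
      ∀ z ∈ sphere (0 : EuclideanSpace ℂ (Fin n)) 1, F z = f z := by
  have hp : ‖p₀‖ = 1 := mem_sphere_zero_iff_norm.1 hp₀
  -- the existence claim is made for every `v`, so that `g` can be chosen as a function of `v`; for
  -- directions that are not normalised the value is arbitrary
  have hline : ∀ v : EuclideanSpace ℂ (Fin n), ∃ g : ℂ → ℂ, inner ℂ p₀ v = -1 →
      ContinuousOn g {ζ : ℂ | ‖((‖v‖ ^ 2 : ℝ) : ℂ) * ζ - 1‖ ≤ 1} ∧
      DifferentiableOn ℂ g {ζ : ℂ | ‖((‖v‖ ^ 2 : ℝ) : ℂ) * ζ - 1‖ < 1} ∧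
      ∀ ζ : ℂ, ‖((‖v‖ ^ 2 : ℝ) : ℂ) * ζ - 1‖ = 1 → g ζ = f (p₀ + ζ • v) := by
    intro v
    by_cases hv : inner ℂ p₀ v = -1
    · have hs : 0 < ‖v‖ ^ 2 := one_pos.trans_le (one_le_norm_sq hp hv)
      have hset : {ζ : ℂ | p₀ + ζ • v ∈ ball (0 : EuclideanSpace ℂ (Fin n)) 1} =
          {ζ : ℂ | ‖((‖v‖ ^ 2 : ℝ) : ℂ) * ζ - 1‖ < 1} := by
        ext ζ
        rw [mem_ofPred_eq, mem_ofPred_eq, mem_ball_zero_iff]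
        exact mem_ball_iff_disc hp hv ζ
      have hv0 : v ≠ 0 := by rintro rfl; simp at hs
      obtain ⟨g, hgc, hgd, hge⟩ := hext v hv0 (by
        rw [hset]
        refine ⟨((‖v‖ ^ 2 : ℝ) : ℂ)⁻¹, ?_⟩
        have hsC : ((‖v‖ ^ 2 : ℝ) : ℂ) ≠ 0 := by exact_mod_cast hs.ne'
        rw [mem_ofPred_eq, mul_inv_cancel₀ hsC, sub_self, norm_zero]
        exact one_pos)
      rw [hset] at hgc hgd
      rw [closure_disc hs] at hgc
      exact ⟨g, fun _ => ⟨hgc, hgd, fun ζ hζ => hge ζ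
        (mem_sphere_zero_iff_norm.2 ((mem_sphere_iff_circle hp hv ζ).2 hζ))⟩⟩
    · exact ⟨0, fun h => absurd h hv⟩
  choose g hg using hline
  have H : LineExtension f p₀ g :=
    { norm_eq := hp
      analytic := fun z hz => hf z (hsV (mem_sphere_zero_iff_norm.2 hz))
      cont := fun v hv => (hg v hv).1
      diff := fun v hv => (hg v hv).2.1
      eq := fun v hv => (hg v hv).2.2 }
  exact ⟨glue f p₀ g, glue_continuousOn H, glue_differentiableOn H,
    fun z hz => glue_eq_on_sphere H (mem_sphere_zero_iff_norm.1 hz)⟩
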